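/- arXiv:0705.4253 — 4 statements merged into one kernel-verified Lean document; each statement's English description precedes it below -/
import Mathlib

section
/- Consider a pairwise separable convex program whose objective F is (λ,w)-scaled diagonally dominant, with the perturbed min-sum algorithm and initial messages satisfying the initialization assumption. Define p* ∈ ℝ^{E⃗} by p*_{i→j} = ∂f_{ij}/∂x_j(x*_i, x*_j) − (J^{(0)}_{i→j})'(x*_j). Then for every p ∈ ℝ^{E⃗} and every t ≥ 0, ‖x^{(t)}(p) − x*‖_∞ ≤ K · (λ^t/(1−λ)) · Σ_{(u,v)∈E⃗} | p_{u→v} − p*_{u→v} |. -/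
open Filter Finset

/-- Partial derivative of `F : (ι → ℝ) → ℝ` in coordinate `i` at `x`. -/
noncomputable def pd {ι : Type*} [DecidableEq ι] (F : (ι → ℝ) → ℝ) (i : ι) (x : ι → ℝ) : ℝ :=
  deriv (fun y => F (Function.update x i y)) (x i)

/-- Second partial derivative `∂²F/∂x_i∂x_j` of `F : (ι → ℝ) → ℝ` at `x`. -/
noncomputable def pd2 {ι : Type*} [DecidableEq ι] (F : (ι → ℝ) → ℝ) (i j : ι) (x : ι → ℝ) : ℝ :=
  pd (pd F j) i x

/-- The directed edges `E⃗` of a simple graph. -/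
abbrev EdgeDir {V : Type*} (G : SimpleGraph V) : Type _ := {e : V × V // G.Adj e.1 e.2}

/-!
For a vertex `i`, the estimate is a local minimizer of `f_i` plus the incoming messages. Wherever
such a message can be compared with a section of the edge factor, minimality becomes a statement
about `∂F/∂x_i`, and by the mean value theorem scaled diagonal dominance puts the minimizer `λ`
times closer to `x*_i`, in the `w`-weighted sup norm, than the neighbors are to theirs.

At any point `y`, the updated message `J^{(t+1)}_{u→i}` touches from below a vertical translate of
the section `f_{ui}(c, ·)`, where `c` minimizes the update. With the recipient `i` frozen at `y`,
the point `c` is a minimizer for the messages of time `t`, so its error is at most the larger of the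
error of `y` and the bound at time `t`. Were the error of `y` the larger one, the contraction would
bound it by `λ` times itself; hence each round gains a factor `λ`. The initial messages have at
least the curvature of a section of the edge factor, so they enter only through their slope errors
at `x*`, which are `p - p*`.
-/

section CoordinateDerivatives

variable {ι : Type*} [DecidableEq ι] {F : (ι → ℝ) → ℝ}

lemma pd_eq_zero_of_isLocalMin {x : ι → ℝ} (hx : IsLocalMin F x) (i : ι) : pd F i x = 0 := by
  have hmin : IsLocalMin F (Function.update x i (x i)) := by rwa [Function.update_eq_self]
  exact (hmin.comp_continuous
    (continuous_const.update i continuous_id).continuousAt).deriv_eq_zero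

lemma pd_eq_fderiv [Finite ι] {x : ι → ℝ} (hF : DifferentiableAt ℝ F x) (i : ι) :
    pd F i x = fderiv ℝ F x (Pi.single i 1) := by
  have := Fintype.ofFinite ι
  have hF' : HasFDerivAt F (fderiv ℝ F x) (Function.update x i (x i)) := by
    rw [Function.update_eq_self]
    exact hF.hasFDerivAt
  exact (hF'.comp_hasDerivAt (x i) (hasDerivAt_update x i (x i))).deriv

variable [Fintype ι]

lemma contDiff_pd {n : WithTop ℕ∞} (hF : ContDiff ℝ (n + 1) F) (i : ι) :
    ContDiff ℝ n (pd F i) := by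
  have hpd : pd F i = fun x => fderiv ℝ F x (Pi.single i 1) :=
    funext fun x => pd_eq_fderiv (hF.differentiable (by simp) x) i
  rw [hpd]
  exact (hF.fderiv_right le_rfl).clm_apply contDiff_const

lemma pd2_eq_fderiv_fderiv (hF : ContDiff ℝ 2 F) (i j : ι) (x : ι → ℝ) :
    pd2 F i j x = fderiv ℝ (fderiv ℝ F) x (Pi.single i 1) (Pi.single j 1) := by
  have hpd : pd F j = fun z => fderiv ℝ F z (Pi.single j 1) :=
    funext fun z => pd_eq_fderiv (hF.differentiable two_ne_zero z) j
  have hdiff : DifferentiableAt ℝ (fderiv ℝ F) x :=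
    (hF.fderiv_right (m := 1) le_rfl).differentiable one_ne_zero x
  rw [pd2, pd_eq_fderiv ((contDiff_pd (n := 1) hF j).differentiable one_ne_zero x), hpd,
    fderiv_clm_apply hdiff (differentiableAt_const _)]
  simp

lemma pd2_comm (hF : ContDiff ℝ 2 F) (i j : ι) (x : ι → ℝ) : pd2 F i j x = pd2 F j i x := by
  rw [pd2_eq_fderiv_fderiv hF, pd2_eq_fderiv_fderiv hF]
  exact (hF.contDiffAt.isSymmSndFDerivAt (by simp)) _ _

lemma exists_sub_eq_sum_mul_pd (hF : Differentiable ℝ F) (x y : ι → ℝ) :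
    ∃ z, F x - F y = ∑ j, (x j - y j) * pd F j z := by
  obtain ⟨z, -, hz⟩ := domain_mvt (fun u _ => (hF u).hasFDerivAt.hasFDerivWithinAt)
    convex_univ (Set.mem_univ y) (Set.mem_univ x)
  refine ⟨z, hz.trans ?_⟩
  conv_lhs => rw [pi_eq_sum_univ' (x - y), map_sum]
  exact Finset.sum_congr rfl fun j _ => by simp [pd_eq_fderiv (hF z)]

end CoordinateDerivatives

section ScaledDiagonalDominance

variable {ι : Type*} [Fintype ι] [DecidableEq ι] {F : (ι → ℝ) → ℝ} {lam M : ℝ} {w : ι → ℝ}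

/-- `(λ, w)`-scaled diagonal dominance of the Hessian of `F`. -/
structure IsScaledDiagDominant (F : (ι → ℝ) → ℝ) (lam : ℝ) (w : ι → ℝ) : Prop where
  lam_pos : 0 < lam
  lam_lt_one : lam < 1
  weight_pos : ∀ i, 0 < w i
  sum_le : ∀ i x, ∑ j ∈ univ.erase i, w j * |pd2 F i j x| ≤ lam * w i * pd2 F i i x

namespace IsScaledDiagDominant

lemma abs_sum_erase_le (hF : IsScaledDiagDominant F lam w) {i : ι} {d : ι → ℝ} {A : ℝ}
    (hA : 0 ≤ A) (hd : ∀ j, j ≠ i → |d j| ≤ w j * A) (z : ι → ℝ) :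
    |∑ j ∈ univ.erase i, d j * pd2 F i j z| ≤ w i * (lam * A) * pd2 F i i z :=
  calc |∑ j ∈ univ.erase i, d j * pd2 F i j z|
      ≤ ∑ j ∈ univ.erase i, |d j * pd2 F i j z| := Finset.abs_sum_le_sum_abs _ _
    _ ≤ ∑ j ∈ univ.erase i, w j * A * |pd2 F i j z| := Finset.sum_le_sum fun j hj => by
        rw [abs_mul]
        exact mul_le_mul_of_nonneg_right (hd j (Finset.ne_of_mem_erase hj)) (abs_nonneg _)
    _ = A * ∑ j ∈ univ.erase i, w j * |pd2 F i j z| := by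
        rw [Finset.mul_sum]
        exact Finset.sum_congr rfl fun j _ => by ring
    _ ≤ A * (lam * w i * pd2 F i i z) := mul_le_mul_of_nonneg_left (hF.sum_le i z) hA
    _ = w i * (lam * A) * pd2 F i i z := by ring

lemma abs_sub_apply_le (hF : IsScaledDiagDominant F lam w) (hF2 : ContDiff ℝ 2 F)
    {i : ι} (hM : 0 < M) (hMle : ∀ z, M ≤ pd2 F i i z) {x y : ι → ℝ} {A ε : ℝ}
    (hA : 0 ≤ A) (hε : 0 ≤ ε) (hxy : ∀ j, j ≠ i → |x j - y j| ≤ w j * A)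
    (hpd : (x i - y i) * (pd F i x - pd F i y) ≤ |x i - y i| * ε) :
    |x i - y i| ≤ w i * (lam * A) + ε / M := by
  obtain ⟨z, hz⟩ := exists_sub_eq_sum_mul_pd
    ((contDiff_pd (n := 1) hF2 i).differentiable one_ne_zero) x y
  have hz' : pd F i x - pd F i y = (x i - y i) * pd2 F i i z +
      ∑ j ∈ univ.erase i, (x j - y j) * pd2 F i j z := by
    simp only [hz, pd2_comm hF2 i]
    exact (Finset.add_sum_erase _ _ (Finset.mem_univ i)).symm
  have hoff := hF.abs_sum_erase_le hA hxy z
  set T := ∑ j ∈ univ.erase i, (x j - y j) * pd2 F i j z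
  have hH : 0 < pd2 F i i z := hM.trans_le (hMle z)
  have hdiag : |x i - y i| * pd2 F i i z ≤ |T| + ε := by
    rcases eq_or_ne (x i - y i) 0 with hd | hd
    · rw [hd, abs_zero, zero_mul]
      positivity
    · refine le_of_mul_le_mul_left ?_ (abs_pos.2 hd)
      have hcross : -(|x i - y i| * |T|) ≤ (x i - y i) * T := by
        rw [← abs_mul]
        exact neg_abs_le _
      rw [hz'] at hpd
      linear_combination hpd + hcross + pd2 F i i z * abs_mul_abs_self (x i - y i)
  calc |x i - y i| ≤ w i * (lam * A) + ε / pd2 F i i z := by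
        rw [← sub_le_iff_le_add', le_div_iff₀ hH]
        linarith
    _ ≤ w i * (lam * A) + ε / M := by gcongr; exact hMle z

end IsScaledDiagDominant

end ScaledDiagonalDominance

section Superderivative

open scoped Topology

/-- `σ` is a superderivative (in the viscosity sense) of `ν` at `y`: it is the slope at `y` of a
function touching `ν` from above there. A min-sum message is a minimum over `y`, so it need not be
differentiable, but it always has superderivatives. -/
def IsSuperderivAt (ν : ℝ → ℝ) (σ y : ℝ) : Prop :=
  ∃ h : ℝ → ℝ, HasDerivAt h σ y ∧ h y = ν y ∧ ν ≤ᶠ[𝓝 y] h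

variable {y : ℝ}

namespace IsSuperderivAt

lemma of_hasDerivAt {ν : ℝ → ℝ} {σ : ℝ} (h : HasDerivAt ν σ y) : IsSuperderivAt ν σ y :=
  ⟨ν, h, rfl, EventuallyLE.rfl⟩

lemma add {μ ν : ℝ → ℝ} {σ τ : ℝ} (hμ : IsSuperderivAt μ σ y) (hν : IsSuperderivAt ν τ y) :
    IsSuperderivAt (fun s => μ s + ν s) (σ + τ) y := by
  obtain ⟨h, hd, hy, hle⟩ := hμ
  obtain ⟨k, kd, ky, kle⟩ := hν
  exact ⟨fun s => h s + k s, hd.add kd, congrArg₂ (· + ·) hy ky, by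
    filter_upwards [hle, kle] with s hs ks using add_le_add hs ks⟩

lemma sum {ι : Type*} {s : Finset ι} {ν : ι → ℝ → ℝ} {σ : ι → ℝ}
    (hν : ∀ j ∈ s, IsSuperderivAt (ν j) (σ j) y) :
    IsSuperderivAt (fun a => ∑ j ∈ s, ν j a) (∑ j ∈ s, σ j) y := by
  choose! h hd hy hle using hν
  refine ⟨fun a => ∑ j ∈ s, h j a, HasDerivAt.fun_sum hd, Finset.sum_congr rfl hy, ?_⟩
  filter_upwards [(Filter.eventually_all_finset s).2 hle] with a ha
  exact Finset.sum_le_sum ha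

lemma eq_zero_of_isLocalMin {ν : ℝ → ℝ} {σ : ℝ} (hν : IsSuperderivAt ν σ y)
    (hy : IsLocalMin ν y) : σ = 0 := by
  obtain ⟨h, hd, heq, hle⟩ := hν
  refine IsLocalMin.hasDerivAt_eq_zero ?_ hd
  filter_upwards [hy, hle] with a hmin ha
  exact heq.trans_le (hmin.trans ha)

end IsSuperderivAt

/-- At the point `y`, the message `ν` can stand in for the edge factor `φ` in the comparison of
gradients with the reference point `(a, b)`: up to a slope error `e`, its superderivative at `y`
exceeds the slope `∂₁φ(a, b)` in the direction `y - a` by at least as much as `∂₁φ(y, c)` exceeds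
`∂₁φ(a, c')`, where `c` and `c'` are `ρ`-close positions of the neighbor. -/
def IsEdgeSurrogate (φ : ℝ → ℝ → ℝ) (a b ρ e : ℝ) (ν : ℝ → ℝ) (y : ℝ) : Prop :=
  ∃ σ c c', IsSuperderivAt ν σ y ∧ |c - c'| ≤ ρ ∧
    (y - a) * (deriv (φ · c) y - deriv (φ · c') a) ≤
      (y - a) * (σ - deriv (φ · b) a) + |y - a| * e

namespace IsEdgeSurrogate

variable {φ : ℝ → ℝ → ℝ} {a b ρ e : ℝ} {ν : ℝ → ℝ}

lemma mono {ρ' e' : ℝ} (hν : IsEdgeSurrogate φ a b ρ e ν y) (hρ : ρ ≤ ρ') (he : e ≤ e') :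
    IsEdgeSurrogate φ a b ρ' e' ν y := by
  obtain ⟨σ, c, c', hσ, hc, hslope⟩ := hν
  exact ⟨σ, c, c', hσ, hc.trans hρ, hslope.trans (by gcongr)⟩

lemma of_touching {c : ℝ} (hφ : DifferentiableAt ℝ (φ · c) y) (hc : |c - b| ≤ ρ)
    (hν : ∀ s, ν s - ν y ≤ φ s c - φ y c) : IsEdgeSurrogate φ a b ρ 0 ν y :=
  ⟨deriv (φ · c) y, c, b,
    ⟨fun s => φ s c + (ν y - φ y c), hφ.hasDerivAt.add_const _, by ring,
      Eventually.of_forall fun s => by linarith [hν s]⟩, hc, by simp⟩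

lemma of_monotone_deriv_sub {z : ℝ} (hν : DifferentiableAt ℝ ν y) (hρ : 0 ≤ ρ)
    (hmono : Monotone fun s => deriv ν s - deriv (φ · z) s) :
    IsEdgeSurrogate φ a b ρ |deriv ν a - deriv (φ · b) a| ν y := by
  refine ⟨deriv ν y, z, z, .of_hasDerivAt hν.hasDerivAt, by simpa using hρ, ?_⟩
  have hcmp : 0 ≤ (y - a) * ((deriv ν y - deriv (φ · z) y) - (deriv ν a - deriv (φ · z) a)) := by
    rcases le_total a y with h | h
    · exact mul_nonneg (sub_nonneg.2 h) (sub_nonneg.2 (hmono h))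
    · exact mul_nonneg_of_nonpos_of_nonpos (sub_nonpos.2 h) (sub_nonpos.2 (hmono h))
  have herr := neg_le_abs ((y - a) * (deriv ν a - deriv (φ · b) a))
  rw [abs_mul] at herr
  linear_combination hcmp + herr

end IsEdgeSurrogate

lemma monotone_deriv_sub_deriv {h k : ℝ → ℝ} (hh : ContDiff ℝ 2 h) (hk : ContDiff ℝ 2 k)
    (hle : ∀ s, deriv (deriv k) s ≤ deriv (deriv h) s) :
    Monotone fun s => deriv h s - deriv k s := by
  have hh' : Differentiable ℝ (deriv h) := hh.differentiable_deriv_two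
  have hk' : Differentiable ℝ (deriv k) := hk.differentiable_deriv_two
  refine monotone_of_deriv_nonneg (hh'.sub hk') fun s => ?_
  rw [deriv_fun_sub (hh' s) (hk' s)]
  exact sub_nonneg.2 (hle s)

end Superderivative

section PairwiseProgram

variable {V : Type*} [Fintype V] {G : SimpleGraph V} [DecidableRel G.Adj]
  {f : V → ℝ → ℝ} {g : V → V → ℝ → ℝ → ℝ}

variable (G f g) in
/-- The pairwise separable objective; the sum over ordered pairs of neighbors counts each edge
twice, whence the factor `1 / 2`. -/
noncomputable def pairwiseObjective (x : V → ℝ) : ℝ :=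
  (∑ i, f i (x i)) + (1 / 2) * ∑ i, ∑ j ∈ G.neighborFinset i, g i j (x i) (x j)

lemma contDiff_pairwiseObjective {n : WithTop ℕ∞} (hf : ∀ i, ContDiff ℝ n (f i))
    (hg : ∀ i j, G.Adj i j → ContDiff ℝ n fun q : ℝ × ℝ => g i j q.1 q.2) :
    ContDiff ℝ n (pairwiseObjective G f g) := by
  refine (ContDiff.sum fun i _ => (hf i).comp (contDiff_apply ℝ ℝ i)).add
    (contDiff_const.mul (ContDiff.sum fun i _ => ContDiff.sum fun j hj => ?_))
  exact (hg i j ((G.mem_neighborFinset i j).1 hj)).comp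
    ((contDiff_apply ℝ ℝ i).prodMk (contDiff_apply ℝ ℝ j))

lemma sum_edgeDir_eq_sum_sum_neighborFinset (q : V → V → ℝ) :
    ∑ e : EdgeDir G, q e.1.1 e.1.2 = ∑ i, ∑ u ∈ G.neighborFinset i, q u i := by
  rw [← Finset.sum_subtype (univ.filter fun x : V × V => G.Adj x.1 x.2) (by simp)
    fun x => q x.1 x.2, Finset.sum_filter, Fintype.sum_prod_type_right]
  refine Finset.sum_congr rfl fun i _ => ?_
  rw [← Finset.sum_filter]
  exact Finset.sum_congr (by ext u; simp [G.adj_comm]) fun _ _ => rfl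

variable [DecidableEq V]

lemma sum_sum_neighborFinset_ite (i : V) (q : V → ℝ) :
    ∑ a, ∑ b ∈ G.neighborFinset a, (if b = i then q a else 0) =
      ∑ a ∈ G.neighborFinset i, q a := by
  simp only [Finset.sum_ite_eq', SimpleGraph.mem_neighborFinset, ← Finset.sum_filter]
  exact Finset.sum_congr (by ext a; simp [G.adj_comm]) fun _ _ => rfl

lemma sum_sum_edge_update_sub (hsymm : ∀ i j, G.Adj i j → ∀ a b, g i j a b = g j i b a)
    (x : V → ℝ) (i : V) (s : ℝ) :
    ∑ a, ∑ b ∈ G.neighborFinset a,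
        (g a b (Function.update x i s a) (Function.update x i s b) - g a b (x a) (x b)) =
      2 * ∑ b ∈ G.neighborFinset i, (g i b s (x b) - g i b (x i) (x b)) := by
  have hedge : ∀ a, ∀ b ∈ G.neighborFinset a,
      g a b (Function.update x i s a) (Function.update x i s b) - g a b (x a) (x b) =
        (if a = i then g i b s (x b) - g i b (x i) (x b) else 0) +
          (if b = i then g i a s (x a) - g i a (x i) (x a) else 0) := by
    intro a b hb
    have hab : G.Adj a b := (G.mem_neighborFinset a b).1 hb
    rcases eq_or_ne a i with rfl | ha
    · simp [hab.ne']
    · rcases eq_or_ne b i with rfl | hbi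
      · simp [ha, hsymm a b hab]
      · simp [ha, hbi]
  have hfst : ∑ a, ∑ b ∈ G.neighborFinset a,
      (if a = i then g i b s (x b) - g i b (x i) (x b) else 0) =
        ∑ b ∈ G.neighborFinset i, (g i b s (x b) - g i b (x i) (x b)) := by
    rw [Finset.sum_eq_single i (fun a _ ha => by simp [ha]) (by simp)]
    simp
  rw [Finset.sum_congr rfl fun a _ => Finset.sum_congr rfl (hedge a)]
  simp only [Finset.sum_add_distrib]
  rw [hfst, sum_sum_neighborFinset_ite i fun a => g i a s (x a) - g i a (x i) (x a), two_mul]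

lemma pairwiseObjective_update_sub (hsymm : ∀ i j, G.Adj i j → ∀ a b, g i j a b = g j i b a)
    (x : V → ℝ) (i : V) (s : ℝ) :
    pairwiseObjective G f g (Function.update x i s) - pairwiseObjective G f g x =
      (f i s + ∑ j ∈ G.neighborFinset i, g i j s (x j)) -
        (f i (x i) + ∑ j ∈ G.neighborFinset i, g i j (x i) (x j)) := by
  have hvertex : ∀ a, f a (Function.update x i s a) - f a (x a) =
      if a = i then f i s - f i (x i) else 0 := by
    intro a
    split_ifs with ha
    · subst ha; simp
    · simp [ha]
  have hvertices : ∑ a, f a (Function.update x i s a) - ∑ a, f a (x a) = f i s - f i (x i) := by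
    rw [← Finset.sum_sub_distrib, Finset.sum_congr rfl fun a _ => hvertex a]
    simp
  have hedges := sum_sum_edge_update_sub hsymm x i s
  simp only [Finset.sum_sub_distrib] at hedges
  unfold pairwiseObjective
  linear_combination hvertices + (1 / 2) * hedges

variable (G f g) in
/-- A smooth pairwise separable program whose objective is `(λ, w)`-scaled diagonally dominant and
has diagonal second derivatives bounded below by `M > 0`. -/
structure IsDominantProgram (M lam : ℝ) (w : V → ℝ) : Prop where
  contDiff_vertex : ∀ i, ContDiff ℝ 2 (f i)
  contDiff_edge : ∀ i j, G.Adj i j → ContDiff ℝ 2 fun q : ℝ × ℝ => g i j q.1 q.2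
  edge_symm : ∀ i j, G.Adj i j → ∀ a b, g i j a b = g j i b a
  curvature_pos : 0 < M
  curvature_le : ∀ i x, M ≤ pd2 (pairwiseObjective G f g) i i x
  dominant : IsScaledDiagDominant (pairwiseObjective G f g) lam w

variable {M lam : ℝ} {w xstar : V → ℝ}

namespace IsDominantProgram

lemma differentiable_section (hP : IsDominantProgram G f g M lam w) {i j : V} (hij : G.Adj i j)
    (b : ℝ) : Differentiable ℝ (g i j · b) :=
  ((hP.contDiff_edge i j hij).comp (contDiff_id.prodMk contDiff_const)).differentiable two_ne_zero

lemma edge_section_eq (hP : IsDominantProgram G f g M lam w) {i j : V} (hij : G.Adj i j) (b : ℝ) :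
    (g i j · b) = g j i b :=
  funext fun a => hP.edge_symm i j hij a b

lemma pd_objective (hP : IsDominantProgram G f g M lam w) (i : V) (x : V → ℝ) :
    pd (pairwiseObjective G f g) i x =
      deriv (f i) (x i) + ∑ j ∈ G.neighborFinset i, deriv (g i j · (x j)) (x i) := by
  have hline : (fun s => pairwiseObjective G f g (Function.update x i s)) = fun s =>
      f i s + ∑ j ∈ G.neighborFinset i, g i j s (x j) + (pairwiseObjective G f g x -
        (f i (x i) + ∑ j ∈ G.neighborFinset i, g i j (x i) (x j))) :=
    funext fun s => by linear_combination pairwiseObjective_update_sub hP.edge_symm x i s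
  rw [pd, hline]
  exact ((((hP.contDiff_vertex i).differentiable two_ne_zero _).hasDerivAt.add
    (HasDerivAt.fun_sum fun j hj => (hP.differentiable_section
      ((G.mem_neighborFinset i j).1 hj) (x j) _).hasDerivAt)).add_const _).deriv

lemma pd_objective_update_piecewise (hP : IsDominantProgram G f g M lam w) (i : V)
    (c x : V → ℝ) (s : ℝ) :
    pd (pairwiseObjective G f g) i (Function.update ((G.neighborFinset i).piecewise c x) i s) =
      deriv (f i) s + ∑ j ∈ G.neighborFinset i, deriv (g i j · (c j)) s := by
  rw [hP.pd_objective, Function.update_self]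
  refine congrArg _ (Finset.sum_congr rfl fun j hj => ?_)
  rw [Function.update_of_ne ((G.mem_neighborFinset i j).1 hj).ne',
    Finset.piecewise_eq_of_mem _ _ _ hj]

lemma abs_sub_le_of_isLocalMin (hP : IsDominantProgram G f g M lam w) {i : V}
    (hx : pd (pairwiseObjective G f g) i xstar = 0) {A y : ℝ} (hA : 0 ≤ A)
    {ν : V → ℝ → ℝ} {e : V → ℝ} (he : ∀ j ∈ G.neighborFinset i, 0 ≤ e j)
    (hν : ∀ j ∈ G.neighborFinset i,
      IsEdgeSurrogate (g i j) (xstar i) (xstar j) (w j * A) (e j) (ν j) y)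
    (hy : IsLocalMin (fun s => f i s + ∑ j ∈ G.neighborFinset i, ν j s) y) :
    |y - xstar i| ≤ w i * (lam * A) + (∑ j ∈ G.neighborFinset i, e j) / M := by
  choose! σ c c' hσ hc hslope using hν
  have hstat : deriv (f i) y + ∑ j ∈ G.neighborFinset i, σ j = 0 :=
    ((IsSuperderivAt.of_hasDerivAt
      ((hP.contDiff_vertex i).differentiable two_ne_zero y).hasDerivAt).add
        (.sum hσ)).eq_zero_of_isLocalMin hy
  let x := Function.update ((G.neighborFinset i).piecewise c xstar) i y
  let x' := Function.update ((G.neighborFinset i).piecewise c' xstar) i (xstar i)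
  have hgrad : (y - xstar i) *
      (pd (pairwiseObjective G f g) i x - pd (pairwiseObjective G f g) i x') ≤
        |y - xstar i| * ∑ j ∈ G.neighborFinset i, e j := by
    have hsum := Finset.sum_le_sum hslope
    simp only [Finset.sum_add_distrib, ← Finset.mul_sum, Finset.sum_sub_distrib] at hsum
    rw [hP.pd_objective] at hx
    rw [hP.pd_objective_update_piecewise, hP.pd_objective_update_piecewise]
    linear_combination hsum + (y - xstar i) * hstat - (y - xstar i) * hx
  have hclose : ∀ j, j ≠ i → |x j - x' j| ≤ w j * A := by
    intro j hj
    by_cases hjN : j ∈ G.neighborFinset i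
    · simpa only [x, x', Function.update_of_ne hj, Finset.piecewise_eq_of_mem _ _ _ hjN]
        using hc j hjN
    · simpa only [x, x', Function.update_of_ne hj, Finset.piecewise_eq_of_notMem _ _ _ hjN,
        sub_self, abs_zero] using mul_nonneg (hP.dominant.weight_pos j).le hA
  have hbound := hP.dominant.abs_sub_apply_le
    (contDiff_pairwiseObjective hP.contDiff_vertex hP.contDiff_edge) hP.curvature_pos
    (hP.curvature_le i) hA (Finset.sum_nonneg he) hclose (by simpa [x, x'] using hgrad)
  simpa [x, x'] using hbound

end IsDominantProgram

end PairwiseProgram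

section MinSum

variable {V : Type*} [Fintype V] [DecidableEq V] {G : SimpleGraph V} [DecidableRel G.Adj]
  {f : V → ℝ → ℝ} {g : V → V → ℝ → ℝ → ℝ} {J : ℕ → V → V → ℝ → ℝ}
  {M lam : ℝ} {w xstar : V → ℝ}

variable (G f g) in
/-- The messages `J t i j`, sent from `i` to `j` at time `t`, obey the min-sum update rule, all
minima being attained. -/
def IsMinSumSequence (J : ℕ → V → V → ℝ → ℝ) : Prop :=
  ∀ t i j, G.Adj i j → ∀ x, IsLeast
    (Set.range fun y => f i y + g i j y x + ∑ u ∈ (G.neighborFinset i).erase j, J t u i y)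
    (J (t + 1) i j x)

lemma le_max_mul_of_le_mul_max {lam A B D : ℝ} (hlam0 : 0 < lam) (hlam1 : lam < 1) (hA : 0 ≤ A)
    (hD : D ≤ lam * max A (max D B)) : D ≤ max A (lam * B) := by
  rw [mul_max_of_nonneg _ _ hlam0.le, mul_max_of_nonneg _ _ hlam0.le, le_max_iff, le_max_iff] at hD
  rcases hD with hDA | hDD | hDB
  · exact le_max_of_le_left (hDA.trans (mul_le_of_le_one_left hA hlam1.le))
  · exact le_max_of_le_left (le_trans (by nlinarith) hA)
  · exact le_max_of_le_right hDB

variable (G f g) in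
/-- `B` bounds the `w`-weighted distance to `xstar` of the local minimizers computed from the
messages `J`. Some incoming messages may be replaced by exact surrogates of weighted radius `A`, at
the price of replacing `B` by `max A B`; freezing the recipient of a message in this way makes its
update minimum a local objective, so that the bound propagates along the recursion. -/
def ControlsError (w xstar : V → ℝ) (J : V → V → ℝ → ℝ) (B : ℝ) : Prop :=
  ∀ i A y (ν : V → ℝ → ℝ), 0 ≤ A →
    (∀ j ∈ G.neighborFinset i, ν j = J j i ∨
      IsEdgeSurrogate (g i j) (xstar i) (xstar j) (w j * A) 0 (ν j) y) →
    IsLocalMin (fun s => f i s + ∑ j ∈ G.neighborFinset i, ν j s) y →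
    |y - xstar i| ≤ w i * max A B

lemma controlsError_of_monotone_deriv_sub (hP : IsDominantProgram G f g M lam w)
    (hx : ∀ i, pd (pairwiseObjective G f g) i xstar = 0) {J₀ : V → V → ℝ → ℝ} {B : ℝ}
    (hJ₀ : ∀ i j, G.Adj i j → Differentiable ℝ (J₀ i j))
    (hmono : ∀ i j, G.Adj i j → ∃ z, Monotone fun s => deriv (J₀ i j) s - deriv (g i j z) s)
    (hB : ∀ i, (∑ u ∈ G.neighborFinset i,
      |deriv (J₀ u i) (xstar i) - deriv (g u i (xstar u)) (xstar i)|) / M ≤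
        w i * ((1 - lam) * B)) :
    ControlsError G f g w xstar J₀ B := by
  intro i A y ν hA hν hy
  have hw := hP.dominant.weight_pos
  have hsurrogate : ∀ j ∈ G.neighborFinset i,
      IsEdgeSurrogate (g i j) (xstar i) (xstar j) (w j * A)
        |deriv (J₀ j i) (xstar i) - deriv (g j i (xstar j)) (xstar i)| (ν j) y := by
    intro j hj
    have hij : G.Adj i j := (G.mem_neighborFinset i j).1 hj
    rcases hν j hj with hνj | hνj
    · obtain ⟨z, hz⟩ := hmono j i hij.symm
      rw [← hP.edge_section_eq hij] at hz ⊢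
      rw [hνj]
      exact .of_monotone_deriv_sub (hJ₀ j i hij.symm y) (mul_nonneg (hw j).le hA) hz
    · exact hνj.mono le_rfl (abs_nonneg _)
  calc |y - xstar i| ≤ w i * (lam * A) + _ :=
        hP.abs_sub_le_of_isLocalMin (hx i) hA (fun _ _ => abs_nonneg _) hsurrogate hy
    _ ≤ w i * (lam * A) + w i * ((1 - lam) * B) := by gcongr; exact hB i
    _ = w i * (lam * A + (1 - lam) * B) := by ring
    _ ≤ w i * max A B := mul_le_mul_of_nonneg_left
        (Convex.combo_le_max A B hP.dominant.lam_pos.le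
          (sub_nonneg.2 hP.dominant.lam_lt_one.le) (by ring)) (hw i).le

namespace IsMinSumSequence

lemma isMinOn_update_section (hJ : IsMinSumSequence G f g J) {i j : V} (hij : G.Adj i j)
    {t : ℕ} {x c : ℝ}
    (hc : f i c + g i j c x + ∑ u ∈ (G.neighborFinset i).erase j, J t u i c = J (t + 1) i j x) :
    IsMinOn (fun s => f i s + ∑ u ∈ G.neighborFinset i,
      Function.update (fun u => J t u i) j (g i j · x) u s) Set.univ c := by
  have hsum : ∀ s, ∑ u ∈ G.neighborFinset i,
      Function.update (fun u => J t u i) j (g i j · x) u s =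
        g i j s x + ∑ u ∈ (G.neighborFinset i).erase j, J t u i s := by
    intro s
    rw [← Finset.add_sum_erase _ _ ((G.mem_neighborFinset i j).2 hij), Function.update_self]
    exact congrArg _ (Finset.sum_congr rfl fun u hu => by
      rw [Function.update_of_ne (Finset.ne_of_mem_erase hu)])
  refine isMinOn_univ_iff.2 fun s => ?_
  simp only [hsum, ← add_assoc]
  exact hc.trans_le ((hJ t i j hij x).2 ⟨s, rfl⟩)

lemma isEdgeSurrogate_succ (hJ : IsMinSumSequence G f g J) (hP : IsDominantProgram G f g M lam w)
    {t : ℕ} {B : ℝ} (hB : ControlsError G f g w xstar (J t) B) {i j : V} (hij : G.Adj i j)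
    (y : ℝ) :
    IsEdgeSurrogate (g j i) (xstar j) (xstar i) (w i * max (|y - xstar j| / w j) B) 0
      (J (t + 1) i j) y := by
  have hw := hP.dominant.weight_pos
  obtain ⟨⟨c, hc⟩, -⟩ := hJ t i j hij y
  have hsection : IsEdgeSurrogate (g i j) (xstar i) (xstar j) (w j * (|y - xstar j| / w j)) 0
      (g i j · y) c :=
    .of_touching (hP.differentiable_section hij y c) (mul_div_cancel₀ _ (hw j).ne').ge
      fun _ => le_rfl
  have hc_near : |c - xstar i| ≤ w i * max (|y - xstar j| / w j) B := by
    refine hB i _ c _ (div_nonneg (abs_nonneg _) (hw j).le) (fun u _ => ?_)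
      ((hJ.isMinOn_update_section hij hc).isLocalMin univ_mem)
    rcases eq_or_ne u j with rfl | huj
    · exact .inr (by simpa using hsection)
    · exact .inl (Function.update_of_ne huj _ _)
  refine .of_touching (hP.differentiable_section hij.symm c y) hc_near fun s => ?_
  have hle := (hJ t i j hij s).2 ⟨c, rfl⟩
  simp only [hP.edge_symm i j hij c] at hc hle
  linarith

lemma controlsError_succ (hJ : IsMinSumSequence G f g J) (hP : IsDominantProgram G f g M lam w)
    (hx : ∀ i, pd (pairwiseObjective G f g) i xstar = 0) {t : ℕ} {B : ℝ}
    (hB : ControlsError G f g w xstar (J t) B) :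
    ControlsError G f g w xstar (J (t + 1)) (lam * B) := by
  intro i A y ν hA hν hy
  have hw := hP.dominant.weight_pos
  set D := |y - xstar i| / w i
  have hsurrogate : ∀ j ∈ G.neighborFinset i,
      IsEdgeSurrogate (g i j) (xstar i) (xstar j) (w j * max A (max D B)) 0 (ν j) y := by
    intro j hj
    have hij : G.Adj i j := (G.mem_neighborFinset i j).1 hj
    rcases hν j hj with hνj | hνj
    · rw [hνj]
      exact (hJ.isEdgeSurrogate_succ hP hB hij.symm y).mono
        (mul_le_mul_of_nonneg_left (le_max_right _ _) (hw j).le) le_rfl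
    · exact hνj.mono (mul_le_mul_of_nonneg_left (le_max_left _ _) (hw j).le) le_rfl
  have hcontract := hP.abs_sub_le_of_isLocalMin (hx i) (hA.trans (le_max_left A (max D B)))
    (fun _ _ => le_rfl) hsurrogate hy
  rw [Finset.sum_const_zero, zero_div, add_zero, ← div_le_iff₀' (hw i)] at hcontract
  rw [← div_le_iff₀' (hw i)]
  exact le_max_mul_of_le_mul_max hP.dominant.lam_pos hP.dominant.lam_lt_one hA hcontract

lemma controlsError_pow (hJ : IsMinSumSequence G f g J) (hP : IsDominantProgram G f g M lam w)
    (hx : ∀ i, pd (pairwiseObjective G f g) i xstar = 0) {B : ℝ}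
    (hB : ControlsError G f g w xstar (J 0) B) (t : ℕ) :
    ControlsError G f g w xstar (J t) (lam ^ t * B) := by
  induction t with
  | zero => simpa using hB
  | succ t ih =>
    rw [pow_succ', mul_assoc]
    exact hJ.controlsError_succ hP hx ih

end IsMinSumSequence

lemma IsMinSumSequence.abs_sub_le [Nonempty V] (hJ : IsMinSumSequence G f g J)
    (hP : IsDominantProgram G f g M lam w)
    (hx : ∀ i, pd (pairwiseObjective G f g) i xstar = 0)
    (hJdiff : ∀ i j, G.Adj i j → Differentiable ℝ (J 0 i j))
    (hJmono : ∀ i j, G.Adj i j → ∃ z, Monotone fun s => deriv (J 0 i j) s - deriv (g i j z) s)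
    {S : ℝ} (hS : ∀ i, ∑ u ∈ G.neighborFinset i,
      |deriv (J 0 u i) (xstar i) - deriv (g u i (xstar u)) (xstar i)| ≤ S)
    {t : ℕ} {r : V} {y : ℝ}
    (hy : IsLocalMin (fun s => f r s + ∑ u ∈ G.neighborFinset r, J t u r s) y) :
    |y - xstar r| ≤ ((1 / M) * (univ.sup' univ_nonempty w / univ.inf' univ_nonempty w)) *
      (lam ^ t / (1 - lam)) * S := by
  have hM := hP.curvature_pos
  have hlam0 := hP.dominant.lam_pos
  have hlam1 : 0 < 1 - lam := sub_pos.2 hP.dominant.lam_lt_one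
  have hm : 0 < univ.inf' univ_nonempty w :=
    (Finset.lt_inf'_iff _).2 fun i _ => hP.dominant.weight_pos i
  have hS0 : 0 ≤ S := (Finset.sum_nonneg fun _ _ => abs_nonneg _).trans (hS r)
  set m := univ.inf' univ_nonempty w
  let B := S / (M * m * (1 - lam))
  have hinit : ControlsError G f g w xstar (J 0) B := by
    refine controlsError_of_monotone_deriv_sub hP hx hJdiff hJmono fun i => ?_
    calc (∑ u ∈ G.neighborFinset i,
          |deriv (J 0 u i) (xstar i) - deriv (g u i (xstar u)) (xstar i)|) / M
        ≤ S / M := by gcongr; exact hS i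
      _ = m * ((1 - lam) * B) := by simp only [B]; field_simp
      _ ≤ w i * ((1 - lam) * B) := by
        gcongr
        exact Finset.inf'_le _ (Finset.mem_univ i)
  have hB : 0 ≤ lam ^ t * B := by positivity
  calc |y - xstar r| ≤ w r * max 0 (lam ^ t * B) :=
        hJ.controlsError_pow hP hx hinit t r 0 y _ le_rfl (fun _ _ => .inl rfl) hy
    _ = w r * (lam ^ t * B) := by rw [max_eq_right hB]
    _ ≤ univ.sup' univ_nonempty w * (lam ^ t * B) := by
        gcongr
        exact Finset.le_sup' _ (Finset.mem_univ r)
    _ = ((1 / M) * (univ.sup' univ_nonempty w / m)) * (lam ^ t / (1 - lam)) * S := by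
        simp only [B]
        field_simp

theorem minSum_perturbed_error_bound_general [Nonempty V]
    (hP : IsDominantProgram G f g M lam w)
    (hx : ∀ i, pd (pairwiseObjective G f g) i xstar = 0)
    {J0 : V → V → ℝ → ℝ} (hJ0smooth : ∀ i j, G.Adj i j → ContDiff ℝ 2 (J0 i j))
    (hJ0conv : ∀ i j, G.Adj i j → ∃ z : ℝ, ∀ s : ℝ,
      deriv (deriv (g i j z)) s ≤ deriv (deriv (J0 i j)) s)
    {p pstar : EdgeDir G → ℝ}
    (hJzero : ∀ i j (h : G.Adj i j) s, J 0 i j s = J0 i j s + p ⟨(i, j), h⟩ * s)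
    (hJ : IsMinSumSequence G f g J)
    (hpstar : ∀ i j (h : G.Adj i j), pstar ⟨(i, j), h⟩ =
      deriv (g i j (xstar i)) (xstar j) - deriv (J0 i j) (xstar j))
    {t : ℕ} {r : V} {y : ℝ}
    (hy : IsLocalMin (fun s => f r s + ∑ u ∈ G.neighborFinset r, J t u r s) y) :
    |y - xstar r| ≤ ((1 / M) * (univ.sup' univ_nonempty w / univ.inf' univ_nonempty w)) *
      (lam ^ t / (1 - lam)) * ∑ e : EdgeDir G, |p e - pstar e| := by
  have hJderiv : ∀ i j (h : G.Adj i j) s,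
      HasDerivAt (J 0 i j) (deriv (J0 i j) s + p ⟨(i, j), h⟩) s := by
    intro i j h s
    rw [funext (hJzero i j h)]
    exact ((hJ0smooth i j h).differentiable two_ne_zero s).hasDerivAt.add
      (by simpa using (hasDerivAt_id s).const_mul (p ⟨(i, j), h⟩))
  let slopeError : V → V → ℝ := fun i j =>
    |deriv (J 0 i j) (xstar j) - deriv (g i j (xstar i)) (xstar j)|
  have hslopeError : ∀ e : EdgeDir G, slopeError e.1.1 e.1.2 = |p e - pstar e| := by
    rintro ⟨⟨i, j⟩, h⟩
    simp only [slopeError, (hJderiv i j h _).deriv, hpstar i j h]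
    congr 1
    ring
  refine hJ.abs_sub_le hP hx (fun i j h s => (hJderiv i j h s).differentiableAt) ?_ ?_ hy
  · intro i j h
    obtain ⟨z, hz⟩ := hJ0conv i j h
    have hsection : ContDiff ℝ 2 (g i j z) :=
      (hP.contDiff_edge i j h).comp (contDiff_const.prodMk contDiff_id)
    refine ⟨z, fun a b hab => ?_⟩
    simp only [(hJderiv i j h _).deriv]
    linarith [monotone_deriv_sub_deriv (hJ0smooth i j h) hsection hz hab]
  · intro i
    simp only [← hslopeError, sum_edgeDir_eq_sum_sum_neighborFinset slopeError]
    exact Finset.single_le_sum (f := fun i => ∑ u ∈ G.neighborFinset i, slopeError u i)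
      (fun _ _ => Finset.sum_nonneg fun _ _ => abs_nonneg _) (Finset.mem_univ i)

end MinSum

lemma isMinOn_univ_of_forall_ne_lt {α β : Type*} [Preorder β] {h : α → β} {a : α}
    (ha : ∀ b, b ≠ a → h a < h b) : IsMinOn h Set.univ a :=
  isMinOn_univ_iff.2 fun b => (eq_or_ne b a).elim (fun hb => hb ▸ le_rfl) fun hb => (ha b hb).le

/-- **Error bound for the perturbed min-sum estimates** (Lemma 4 of Moallemi–Van Roy).
For a `(λ,w)`-scaled diagonally dominant pairwise separable convex program,
`‖x⁽ᵗ⁾(p) - x*‖_∞ ≤ K (λᵗ/(1-λ)) Σ_{(u,v)∈E⃗} |p_{u→v} - p*_{u→v}|` for every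
perturbation `p` and every `t ≥ 0`. -/
theorem minSum_perturbed_error_bound
    {V : Type*} [Fintype V] [DecidableEq V] [Nonempty V]
    (G : SimpleGraph V) [DecidableRel G.Adj]
    -- the factors of the pairwise separable convex program
    (f : V → ℝ → ℝ) (g : V → V → ℝ → ℝ → ℝ)
    (hf_sconv : ∀ i, StrictConvexOn ℝ Set.univ (f i))
    (hf_coer : ∀ i, Tendsto (f i) (cocompact ℝ) atTop)
    (hf_smooth : ∀ i, ContDiff ℝ 2 (f i))
    (hg_conv : ∀ i j, G.Adj i j → ConvexOn ℝ Set.univ (fun q : ℝ × ℝ => g i j q.1 q.2))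
    (hg_smooth : ∀ i j, G.Adj i j → ContDiff ℝ 2 (fun q : ℝ × ℝ => g i j q.1 q.2))
    (hg_symm : ∀ i j, G.Adj i j → ∀ a b : ℝ, g i j a b = g j i b a)
    -- the objective function
    (F : (V → ℝ) → ℝ)
    (hF : F = fun x => (∑ i, f i (x i)) +
      (1 / 2) * ∑ i, ∑ j ∈ G.neighborFinset i, g i j (x i) (x j))
    -- `M = min_i inf_x ∂²F/∂x_i²(x) > 0`
    (M : ℝ) (hM : 0 < M) (hMle : ∀ (i : V) (x : V → ℝ), M ≤ pd2 F i i x)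
    -- the unique optimal solution
    (xstar : V → ℝ) (hxstar : ∀ y, y ≠ xstar → F xstar < F y)
    -- scaled diagonal dominance
    (lam : ℝ) (w : V → ℝ) (hlam0 : 0 < lam) (hlam1 : lam < 1) (hw : ∀ i, 0 < w i)
    (hdd : ∀ (i : V) (x : V → ℝ),
      ∑ j ∈ univ.erase i, w j * |pd2 F i j x| ≤ lam * w i * pd2 F i i x)
    -- the initial messages and the initialization assumption
    (J0 : V → V → ℝ → ℝ)
    (hJ0smooth : ∀ i j, G.Adj i j → ContDiff ℝ 2 (J0 i j))
    (hJ0conv : ∀ i j, G.Adj i j → ∃ z : ℝ, ∀ xj : ℝ,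
      deriv (deriv (fun b => g i j z b)) xj ≤ deriv (deriv (J0 i j)) xj)
    -- the perturbed min-sum messages and their update rule (minima are attained)
    (JP : ℕ → V → V → (EdgeDir G → ℝ) → ℝ → ℝ)
    (hJP0 : ∀ (i j : V) (h : G.Adj i j) (p : EdgeDir G → ℝ) (xj : ℝ),
      JP 0 i j p xj = J0 i j xj + p ⟨(i, j), h⟩ * xj)
    (hJPrec : ∀ (t : ℕ) (i j : V), G.Adj i j → ∀ (p : EdgeDir G → ℝ) (xj : ℝ),
      IsLeast (Set.range fun y : ℝ =>
          f i y + g i j y xj + ∑ u ∈ (G.neighborFinset i).erase j, JP t u i p y)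
        (JP (t + 1) i j p xj))
    -- the perturbed estimates: unique minimizers of the local objectives `b⁽ᵗ⁾_i(·, p)`
    (xEstP : ℕ → V → (EdgeDir G → ℝ) → ℝ)
    (hxEstP : ∀ (t : ℕ) (i : V) (p : EdgeDir G → ℝ) (y : ℝ), y ≠ xEstP t i p →
      f i (xEstP t i p) + ∑ u ∈ G.neighborFinset i, JP t u i p (xEstP t i p) <
        f i y + ∑ u ∈ G.neighborFinset i, JP t u i p y)
    -- the perturbation `p*`
    (pstar : EdgeDir G → ℝ)
    (hpstar : ∀ (i j : V) (h : G.Adj i j),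
      pstar ⟨(i, j), h⟩ =
        deriv (fun b => g i j (xstar i) b) (xstar j) - deriv (J0 i j) (xstar j)) :
    ∀ (p : EdgeDir G → ℝ) (t : ℕ) (r : V),
      |xEstP t r p - xstar r| ≤
        ((1 / M) * (univ.sup' univ_nonempty w / univ.inf' univ_nonempty w)) *
          (lam ^ t / (1 - lam)) * ∑ e : EdgeDir G, |p e - pstar e| := by
  intro p t r
  subst hF
  exact minSum_perturbed_error_bound_general
    ⟨hf_smooth, hg_smooth, hg_symm, hM, hMle, hlam0, hlam1, hw, hdd⟩
    (pd_eq_zero_of_isLocalMin ((isMinOn_univ_of_forall_ne_lt hxstar).isLocalMin univ_mem))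
    hJ0smooth hJ0conv (hJP0 · · · p) (fun t i j h => hJPrec t i j h p) hpstar
    ((isMinOn_univ_of_forall_ne_lt (hxEstP t r p)).isLocalMin univ_mem)
end

section
/- Let 𝒱 be a finite set, Γ ∈ ℝ^{𝒱×𝒱} a symmetric matrix with strictly positive diagonal entries, w ∈ ℝ^𝒱 with w > 0 componentwise, and 0 < λ < 1, such that for every j ∈ 𝒱, Σ_{i∈𝒱∖{j}} w_i |Γ_{ij}| ≤ λ w_j Γ_{jj}. Let D = diag(Γ) and R = I − D^{−1}Γ. Fix r ∈ 𝒱, t ≥ 0, and h ∈ ℝ^𝒱, and suppose that [R^s D^{−1} h]_r = 0 for all 0 ≤ s < t. Let v be the unique solution of Γ v + h = 0. Then |v_r| / w_r ≤ (λ^t/(1−λ)) · max_{i∈𝒱} |h_i| / (w_i Γ_{ii}). -/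
open Finset

/-!
The system `Γ v + h = 0` is the fixed-point equation `v = R v - D⁻¹ h`. By symmetry, the column
dominance of `Γ` is also row dominance, which makes `R` a `λ`-contraction in the weighted sup-norm,
so `‖v‖ ≤ ‖D⁻¹ h‖ / (1 - λ)`. Iterating the fixed-point equation `t` times and reading coordinate
`r`, where the terms `Rˢ D⁻¹ h` vanish, gives `v_r = [Rᵗ v]_r`, which contributes the factor `λᵗ`.
-/

open Matrix

section WeightedSupNorm

variable {ι E : Type*}

/-- The weighted sup-norm `‖x‖^w_∞ = max_j ‖x_j‖ / w_j`, with value `0` on an empty index type. -/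
noncomputable def weightedSupNorm [Norm E] (w : ι → ℝ) (x : ι → E) : ℝ :=
  ⨆ j, ‖x j‖ / w j

/-- The maximal weighted row sum `‖A‖^w_∞ = max_j (1 / w_j) ∑ i, w_i ‖A_{ji}‖`. Over `ℝ` this is the
operator norm induced by `weightedSupNorm w`; in general it bounds that operator norm. -/
noncomputable def weightedOpNorm [Fintype ι] [Norm E] (w : ι → ℝ) (A : Matrix ι ι E) : ℝ :=
  ⨆ j, (∑ i, w i * ‖A j i‖) / w j

section Vector

variable [SeminormedAddCommGroup E] {w : ι → ℝ}

theorem weightedSupNorm_nonneg (hw : ∀ i, 0 ≤ w i) (x : ι → E) : 0 ≤ weightedSupNorm w x :=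
  Real.iSup_nonneg fun j => div_nonneg (norm_nonneg _) (hw j)

theorem weightedSupNorm_neg (w : ι → ℝ) (x : ι → E) :
    weightedSupNorm w (-x) = weightedSupNorm w x := by
  simp only [weightedSupNorm, Pi.neg_apply, norm_neg]

theorem norm_div_le_weightedSupNorm [Finite ι] (w : ι → ℝ) (x : ι → E) (j : ι) :
    ‖x j‖ / w j ≤ weightedSupNorm w x :=
  le_ciSup (f := fun j => ‖x j‖ / w j) (Set.finite_range _).bddAbove j

theorem norm_le_weightedSupNorm_mul [Finite ι] (x : ι → E) {j : ι} (hw : 0 < w j) :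
    ‖x j‖ ≤ weightedSupNorm w x * w j :=
  (div_le_iff₀ hw).mp (norm_div_le_weightedSupNorm w x j)

theorem weightedSupNorm_add_le [Finite ι] (hw : ∀ i, 0 ≤ w i) (x y : ι → E) :
    weightedSupNorm w (x + y) ≤ weightedSupNorm w x + weightedSupNorm w y := by
  refine Real.iSup_le (fun j => ?_)
    (add_nonneg (weightedSupNorm_nonneg hw x) (weightedSupNorm_nonneg hw y))
  calc ‖x j + y j‖ / w j ≤ (‖x j‖ + ‖y j‖) / w j :=
        div_le_div_of_nonneg_right (norm_add_le _ _) (hw j)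
    _ = ‖x j‖ / w j + ‖y j‖ / w j := add_div _ _ _
    _ ≤ weightedSupNorm w x + weightedSupNorm w y :=
        add_le_add (norm_div_le_weightedSupNorm w x j) (norm_div_le_weightedSupNorm w y j)

end Vector

variable [Fintype ι] {w : ι → ℝ}

theorem weightedOpNorm_nonneg [SeminormedAddCommGroup E] (hw : ∀ i, 0 ≤ w i) (A : Matrix ι ι E) :
    0 ≤ weightedOpNorm w A :=
  Real.iSup_nonneg fun j =>
    div_nonneg (sum_nonneg fun i _ => mul_nonneg (hw i) (norm_nonneg _)) (hw j)

theorem row_sum_div_le_weightedOpNorm [Norm E] (w : ι → ℝ) (A : Matrix ι ι E) (j : ι) :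
    (∑ i, w i * ‖A j i‖) / w j ≤ weightedOpNorm w A :=
  le_ciSup (f := fun j => (∑ i, w i * ‖A j i‖) / w j) (Set.finite_range _).bddAbove j

theorem weightedSupNorm_mulVec_le [NonUnitalSeminormedRing E] (hw : ∀ i, 0 < w i)
    (A : Matrix ι ι E) (x : ι → E) :
    weightedSupNorm w (A *ᵥ x) ≤ weightedOpNorm w A * weightedSupNorm w x := by
  have hx := weightedSupNorm_nonneg (fun i => (hw i).le) x
  refine Real.iSup_le (fun j => ?_) (mul_nonneg (weightedOpNorm_nonneg (fun i => (hw i).le) A) hx)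
  have hrow : ‖(A *ᵥ x) j‖ ≤ (∑ i, w i * ‖A j i‖) * weightedSupNorm w x :=
    calc ‖∑ i, A j i * x i‖ ≤ ∑ i, ‖A j i‖ * (weightedSupNorm w x * w i) :=
          norm_sum_le_of_le _ fun i _ => (norm_mul_le _ _).trans <|
            mul_le_mul_of_nonneg_left (norm_le_weightedSupNorm_mul x (hw i)) (norm_nonneg _)
      _ = (∑ i, w i * ‖A j i‖) * weightedSupNorm w x := by
          rw [sum_mul]
          exact sum_congr rfl fun i _ => by ring
  calc ‖(A *ᵥ x) j‖ / w j ≤ (∑ i, w i * ‖A j i‖) * weightedSupNorm w x / w j :=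
        div_le_div_of_nonneg_right hrow (hw j).le
    _ = (∑ i, w i * ‖A j i‖) / w j * weightedSupNorm w x := mul_div_right_comm _ _ _
    _ ≤ weightedOpNorm w A * weightedSupNorm w x :=
        mul_le_mul_of_nonneg_right (row_sum_div_le_weightedOpNorm w A j) hx

theorem weightedSupNorm_pow_mulVec_le [DecidableEq ι] [SeminormedRing E] (hw : ∀ i, 0 < w i)
    (A : Matrix ι ι E) (s : ℕ) (x : ι → E) :
    weightedSupNorm w (A ^ s *ᵥ x) ≤ weightedOpNorm w A ^ s * weightedSupNorm w x := by
  induction s with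
  | zero => simp
  | succ s ih =>
    calc weightedSupNorm w (A ^ (s + 1) *ᵥ x) = weightedSupNorm w (A *ᵥ (A ^ s *ᵥ x)) := by
          rw [pow_succ', mulVec_mulVec]
      _ ≤ weightedOpNorm w A * weightedSupNorm w (A ^ s *ᵥ x) := weightedSupNorm_mulVec_le hw _ _
      _ ≤ weightedOpNorm w A * (weightedOpNorm w A ^ s * weightedSupNorm w x) :=
          mul_le_mul_of_nonneg_left ih (weightedOpNorm_nonneg (fun i => (hw i).le) A)
      _ = weightedOpNorm w A ^ (s + 1) * weightedSupNorm w x := by rw [pow_succ', mul_assoc]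

end WeightedSupNorm

section AffineFixedPoint

variable {ι E : Type*} [Fintype ι]

theorem weightedSupNorm_le_of_mulVec_add_eq [NonUnitalSeminormedRing E] {w : ι → ℝ}
    (hw : ∀ i, 0 < w i) {A : Matrix ι ι E} {c : ℝ} (hA : weightedOpNorm w A ≤ c) (hc : c < 1)
    {b v : ι → E} (hv : A *ᵥ v + b = v) :
    weightedSupNorm w v ≤ weightedSupNorm w b / (1 - c) := by
  have hw' : ∀ i, 0 ≤ w i := fun i => (hw i).le
  have hself : weightedSupNorm w v ≤ c * weightedSupNorm w v + weightedSupNorm w b :=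
    calc weightedSupNorm w v = weightedSupNorm w (A *ᵥ v + b) := by rw [hv]
      _ ≤ weightedSupNorm w (A *ᵥ v) + weightedSupNorm w b := weightedSupNorm_add_le hw' _ _
      _ ≤ weightedOpNorm w A * weightedSupNorm w v + weightedSupNorm w b := by
          gcongr
          exact weightedSupNorm_mulVec_le hw A v
      _ ≤ c * weightedSupNorm w v + weightedSupNorm w b := by
          gcongr
          exact weightedSupNorm_nonneg hw' v
  rw [le_div_iff₀ (sub_pos.mpr hc)]
  linarith

theorem pow_mulVec_apply_eq_of_mulVec_add_eq [DecidableEq ι] [Semiring E] {A : Matrix ι ι E}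
    {b v : ι → E} (hv : A *ᵥ v + b = v) {r : ι} {t : ℕ} (hb : ∀ s < t, (A ^ s *ᵥ b) r = 0) :
    (A ^ t *ᵥ v) r = v r := by
  induction t with
  | zero => simp
  | succ t ih =>
    calc (A ^ (t + 1) *ᵥ v) r = (A ^ t *ᵥ (A *ᵥ v + b)) r := by
          rw [mulVec_add, Pi.add_apply, hb t t.lt_succ_self, add_zero, mulVec_mulVec, pow_succ]
      _ = (A ^ t *ᵥ v) r := by rw [hv]
      _ = v r := ih fun s hs => hb s (hs.trans t.lt_succ_self)

theorem norm_div_le_of_mulVec_add_eq [DecidableEq ι] [SeminormedRing E] {w : ι → ℝ}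
    (hw : ∀ i, 0 < w i) {A : Matrix ι ι E} {c : ℝ} (hA : weightedOpNorm w A ≤ c) (hc : c < 1)
    {b v : ι → E} (hv : A *ᵥ v + b = v) {r : ι} {t : ℕ} (hb : ∀ s < t, (A ^ s *ᵥ b) r = 0) :
    ‖v r‖ / w r ≤ c ^ t / (1 - c) * weightedSupNorm w b := by
  have hw' : ∀ i, 0 ≤ w i := fun i => (hw i).le
  have hA0 : 0 ≤ weightedOpNorm w A := weightedOpNorm_nonneg hw' A
  calc ‖v r‖ / w r = ‖(A ^ t *ᵥ v) r‖ / w r := by rw [pow_mulVec_apply_eq_of_mulVec_add_eq hv hb]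
    _ ≤ weightedSupNorm w (A ^ t *ᵥ v) := norm_div_le_weightedSupNorm w _ r
    _ ≤ weightedOpNorm w A ^ t * weightedSupNorm w v := weightedSupNorm_pow_mulVec_le hw A t v
    _ ≤ c ^ t * (weightedSupNorm w b / (1 - c)) :=
        mul_le_mul (pow_le_pow_left₀ hA0 hA t) (weightedSupNorm_le_of_mulVec_add_eq hw hA hc hv)
          (weightedSupNorm_nonneg hw' v) (pow_nonneg (hA0.trans hA) t)
    _ = c ^ t / (1 - c) * weightedSupNorm w b := by ring

end AffineFixedPoint

section Jacobi

variable {ι 𝕜 : Type*} [Fintype ι] [DecidableEq ι]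

/-- The iteration matrix `I - D⁻¹ Γ`, with `D = diag(Γ)`, of the Jacobi method for linear systems
with matrix `Γ`. -/
noncomputable def jacobiMatrix [CommRing 𝕜] (Γ : Matrix ι ι 𝕜) : Matrix ι ι 𝕜 :=
  1 - (diagonal Γ.diag)⁻¹ * Γ

theorem jacobiMatrix_mulVec_add_eq [CommRing 𝕜] {Γ : Matrix ι ι 𝕜} {b v : ι → 𝕜}
    (hv : Γ *ᵥ v = b) : jacobiMatrix Γ *ᵥ v + (diagonal Γ.diag)⁻¹ *ᵥ b = v := by
  rw [jacobiMatrix, sub_mulVec, one_mulVec, ← mulVec_mulVec, hv, sub_add_cancel]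

theorem inv_diagonal_of_ne_zero [Field 𝕜] {d : ι → 𝕜} (hd : ∀ i, d i ≠ 0) :
    (diagonal d)⁻¹ = diagonal d⁻¹ := by
  refine inv_eq_right_inv ?_
  rw [diagonal_mul_diagonal, ← diagonal_one]
  exact congrArg diagonal (funext fun i => mul_inv_cancel₀ (hd i))

theorem jacobiMatrix_apply_self [Field 𝕜] {Γ : Matrix ι ι 𝕜} (hΓ : ∀ i, Γ i i ≠ 0) (j : ι) :
    jacobiMatrix Γ j j = 0 := by
  simp [jacobiMatrix, inv_diagonal_of_ne_zero (d := Γ.diag) hΓ, hΓ j]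

theorem jacobiMatrix_apply_of_ne [Field 𝕜] {Γ : Matrix ι ι 𝕜} (hΓ : ∀ i, Γ i i ≠ 0) {i j : ι}
    (hij : i ≠ j) : jacobiMatrix Γ j i = -((Γ j j)⁻¹ * Γ j i) := by
  simp [jacobiMatrix, inv_diagonal_of_ne_zero (d := Γ.diag) hΓ, hij.symm]

variable [NormedField 𝕜] {Γ : Matrix ι ι 𝕜} {w : ι → ℝ}

theorem weightedOpNorm_jacobiMatrix_le [Nonempty ι] (hΓ : ∀ i, Γ i i ≠ 0) (hw : ∀ i, 0 < w i)
    {lam : ℝ} (hdd : ∀ j, ∑ i ∈ univ.erase j, w i * ‖Γ j i‖ ≤ lam * w j * ‖Γ j j‖) :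
    weightedOpNorm w (jacobiMatrix Γ) ≤ lam := by
  refine ciSup_le fun j => ?_
  have hrow : ∑ i, w i * ‖jacobiMatrix Γ j i‖ =
      (∑ i ∈ univ.erase j, w i * ‖Γ j i‖) / ‖Γ j j‖ := by
    rw [← add_sum_erase _ _ (mem_univ j), jacobiMatrix_apply_self hΓ, norm_zero, mul_zero,
      zero_add, sum_div]
    refine sum_congr rfl fun i hi => ?_
    rw [jacobiMatrix_apply_of_ne hΓ (ne_of_mem_erase hi), norm_neg, norm_mul, norm_inv]
    ring
  rw [hrow, div_le_iff₀ (hw j), div_le_iff₀ (norm_pos_iff.mpr (hΓ j))]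
  exact hdd j

theorem weightedSupNorm_inv_diagonal_mulVec {d : ι → 𝕜} (hd : ∀ i, d i ≠ 0) (w : ι → ℝ)
    (h : ι → 𝕜) :
    weightedSupNorm w ((diagonal d)⁻¹ *ᵥ h) = ⨆ i, ‖h i‖ / (w i * ‖d i‖) := by
  refine iSup_congr fun i => ?_
  rw [inv_diagonal_of_ne_zero hd, mulVec_diagonal, Pi.inv_apply, norm_mul, norm_inv]
  ring

theorem diagonallyDominant_solution_coordinate_bound_general (hΓ : ∀ i, Γ i i ≠ 0)
    (hw : ∀ i, 0 < w i) {lam : ℝ} (hlam1 : lam < 1)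
    (hdd : ∀ j, ∑ i ∈ univ.erase j, w i * ‖Γ j i‖ ≤ lam * w j * ‖Γ j j‖)
    {r : ι} {t : ℕ} {h v : ι → 𝕜}
    (hr : ∀ s < t, (jacobiMatrix Γ ^ s *ᵥ ((diagonal Γ.diag)⁻¹ *ᵥ h)) r = 0)
    (hv : Γ *ᵥ v + h = 0) :
    ‖v r‖ / w r ≤ lam ^ t / (1 - lam) * ⨆ i, ‖h i‖ / (w i * ‖Γ i i‖) := by
  have : Nonempty ι := ⟨r⟩
  have hfix : jacobiMatrix Γ *ᵥ v + -((diagonal Γ.diag)⁻¹ *ᵥ h) = v := by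
    rw [← mulVec_neg]
    exact jacobiMatrix_mulVec_add_eq (eq_neg_of_add_eq_zero_left hv)
  calc ‖v r‖ / w r
      ≤ lam ^ t / (1 - lam) * weightedSupNorm w (-((diagonal Γ.diag)⁻¹ *ᵥ h)) :=
        norm_div_le_of_mulVec_add_eq hw (weightedOpNorm_jacobiMatrix_le hΓ hw hdd) hlam1 hfix
          fun s hs => by rw [mulVec_neg, Pi.neg_apply, hr s hs, neg_zero]
    _ = lam ^ t / (1 - lam) * ⨆ i, ‖h i‖ / (w i * ‖Γ i i‖) := by
        rw [weightedSupNorm_neg, weightedSupNorm_inv_diagonal_mulVec (d := Γ.diag) hΓ]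
        simp only [diag_apply]

end Jacobi

/-- **The key estimate in the proof of Lemma 3 of Moallemi–Van Roy.**
If `Γ` is symmetric with positive diagonal and weighted diagonally dominant, `Γ v + h = 0`,
and the first `t` Neumann-series terms vanish at the coordinate `r`
(`[Rˢ D⁻¹ h]_r = 0` for all `s < t`, where `D = diag(Γ)`, `R = I - D⁻¹Γ`), then
`|v_r| / w_r ≤ (λᵗ/(1-λ)) · max_i |h_i|/(w_i Γ_{ii})`. -/
theorem diagonallyDominant_solution_coordinate_bound
    {𝒱 : Type*} [Fintype 𝒱] [DecidableEq 𝒱] [Nonempty 𝒱]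
    (Γ : Matrix 𝒱 𝒱 ℝ) (hΓsym : Γ.IsSymm) (hΓdiag : ∀ i, 0 < Γ i i)
    (w : 𝒱 → ℝ) (hw : ∀ i, 0 < w i)
    (lam : ℝ) (hlam0 : 0 < lam) (hlam1 : lam < 1)
    (hdd : ∀ j, ∑ i ∈ univ.erase j, w i * |Γ i j| ≤ lam * w j * Γ j j)
    (r : 𝒱) (t : ℕ) (hvec : 𝒱 → ℝ) :
    ∀ D R : Matrix 𝒱 𝒱 ℝ,
      D = Matrix.diagonal (fun i => Γ i i) → R = 1 - D⁻¹ * Γ →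
      (∀ s : ℕ, s < t → (R ^ s).mulVec (D⁻¹.mulVec hvec) r = 0) →
      ∀ v : 𝒱 → ℝ, Γ.mulVec v + hvec = 0 →
        |v r| / w r ≤
          lam ^ t / (1 - lam) *
            univ.sup' univ_nonempty (fun i => |hvec i| / (w i * Γ i i)) := by
  rintro _ _ rfl rfl hr v hv
  simpa only [Real.norm_eq_abs, abs_of_pos (hΓdiag _), sup'_univ_eq_ciSup] using
    diagonallyDominant_solution_coordinate_bound_general (fun i => (hΓdiag i).ne') hw hlam1
      (fun j => by simpa only [Real.norm_eq_abs, abs_of_pos (hΓdiag j), hΓsym.apply] using hdd j)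
      hr hv
end

section
/- Consider a pairwise separable convex program and run the min-sum algorithm with the given initial messages. Fix r ∈ V and t ≥ 0, let 𝒯 = (𝒱,ℰ), σ, and F_𝒯 be the associated computation tree rooted at r with depth t and its objective, and assume F_𝒯 attains its minimum at a unique point x̃ ∈ ℝ^𝒱. Then the value of x̃ at the root vertex (the length-zero walk at r) equals the min-sum estimate: x̃_root = x^{(t)}_r. -/
open Filter Finset

/-- Vertices of the depth-`t` computation tree: a vertex is a walk from the root,
encoded by its length `k ≤ t` and the sequence of vertices visited after the root. -/
abbrev TVert (V : Type*) (t : ℕ) : Type _ := (k : Fin (t + 1)) × (Fin k.1 → V)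

/-- The vertex of the original graph at position `m` along the walk `a`
(position `0` is the root `r`). -/
def walkAt {V : Type*} {t : ℕ} (r : V) (a : TVert V t) (m : ℕ) : V :=
  if h : 1 ≤ m ∧ m ≤ a.1.1 then a.2 ⟨m - 1, by omega⟩ else r

/-- The label `σ` of a computation-tree vertex: the final vertex of the walk. -/
def sigTV {V : Type*} {t : ℕ} (r : V) (a : TVert V t) : V := walkAt r a a.1.1

/-- The parent of a computation-tree vertex (the root is its own parent). -/
def parTV {V : Type*} {t : ℕ} (a : TVert V t) : TVert V t :=
  ⟨⟨a.1.1 - 1, by have := a.1.isLt; omega⟩,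
    fun m => a.2 ⟨m.1, lt_of_lt_of_le m.isLt (Nat.sub_le _ _)⟩⟩

/-- The root of the computation tree: the length-zero walk. -/
def rootTV (V : Type*) (t : ℕ) : TVert V t := ⟨⟨0, Nat.succ_pos t⟩, fun m => m.elim0⟩

/-- The set of vertices of the computation tree rooted at `r` of depth `t`:
non-backtracking walks in `G` starting at `r` of length at most `t`. -/
def validSet {V : Type*} [Fintype V] [DecidableEq V] (G : SimpleGraph V) [DecidableRel G.Adj]
    (r : V) (t : ℕ) : Finset (TVert V t) :=
  univ.filter (fun a =>
    (∀ m, m < a.1.1 → G.Adj (walkAt r a m) (walkAt r a (m + 1))) ∧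
    (∀ m, m < a.1.1 - 1 → walkAt r a m ≠ walkAt r a (m + 2)))

/-!
Minimizing the tree objective over the deepest layer of variables is one round of the min-sum
update: the variable at a depth-`(s + 1)` vertex `a` only interacts with its parent, and minimizing
over it turns the messages `J⁽ᵏ⁾` entering `a` into the message `J⁽ᵏ⁺¹⁾` that `a` sends to its
parent. The result is the objective of the tree cut at depth `s`, with `J⁽ᵏ⁺¹⁾` at its leaves. After
`t` rounds only the root variable is left, and its objective is the local objective `b⁽ᵗ⁾_r`. Hence
the root value of a minimizer of the tree objective minimizes `b⁽ᵗ⁾_r`.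
-/

section PartialMinimization

variable {ι X R : Type*} [Preorder R] {F H K : (ι → X) → R} {A B : Set ι}

/-- Partial minimization: for every `x`, the minimum of `F` over the coordinates in `A`, the other
coordinates being those of `x`, is attained and equals `H x`. -/
def IsPartialMin (F : (ι → X) → R) (A : Set ι) (H : (ι → X) → R) : Prop :=
  ∀ x, IsLeast (F '' {y | Set.EqOn y x Aᶜ}) (H x)

lemma isPartialMin_empty (F : (ι → X) → R) : IsPartialMin F ∅ F := fun x => by
  simp [Set.eqOn_univ]

lemma IsPartialMin.trans (hF : IsPartialMin F A H) (hH : IsPartialMin H B K) :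
    IsPartialMin F (A ∪ B) K := by
  classical
  refine fun x => ⟨?_, ?_⟩
  · obtain ⟨y, hyx, hHy⟩ := (hH x).1
    obtain ⟨z, hzy, hFz⟩ := (hF y).1
    refine ⟨z, fun i hi => ?_, hFz.trans hHy⟩
    rw [Set.compl_union] at hi
    exact (hzy hi.1).trans (hyx hi.2)
  · rintro _ ⟨y, hyx, rfl⟩
    have hxy : Set.EqOn (A.piecewise x y) x Bᶜ := fun i hiB => by
      by_cases hiA : i ∈ A
      · exact A.piecewise_eq_of_mem x y hiA
      · exact (A.piecewise_eq_of_notMem x y hiA).trans (hyx fun h => h.elim hiA hiB)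
    calc K x ≤ H (A.piecewise x y) := (hH x).2 ⟨_, hxy, rfl⟩
      _ ≤ F y := (hF _).2 ⟨y, (A.piecewise_eqOn_compl x y).symm, rfl⟩

lemma IsPartialMin.isMinOn (hF : IsPartialMin F A H) {x : ι → X}
    (hx : IsMinOn F {y | Set.EqOn y x (A ∪ B)ᶜ} x) : IsMinOn H {y | Set.EqOn y x Bᶜ} x := by
  intro y hyx
  obtain ⟨z, hzy, hFz⟩ := (hF y).1
  have hzx : Set.EqOn z x (A ∪ B)ᶜ := fun i hi => by
    rw [Set.compl_union] at hi
    exact (hzy hi.1).trans (hyx hi.2)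
  calc H x ≤ F x := (hF x).2 ⟨x, Set.eqOn_refl x _, rfl⟩
    _ ≤ F z := hx hzx
    _ = H y := hFz

lemma isMinOn_of_forall_ne_lt {α : Type*} {φ : α → R} {s : Set α} {a : α}
    (h : ∀ y ∈ s, y ≠ a → φ a < φ y) : IsMinOn φ s a := fun y hy =>
  (eq_or_ne y a).elim (fun hya => (congrArg φ hya).ge) fun hya => (h y hy hya).le

lemma isPartialMin_add_sum [AddCommMonoid R] [IsOrderedAddMonoid R]
    {S : Finset ι} {P : (ι → X) → R} {h : ι → (ι → X) → X → R} {m : ι → (ι → X) → R}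
    (hP : DependsOn P (↑S)ᶜ) (hh : ∀ i ∈ S, DependsOn (h i) (↑S)ᶜ)
    (hm : ∀ i ∈ S, ∀ x, IsLeast (Set.range (h i x)) (m i x)) :
    IsPartialMin (fun x => P x + ∑ i ∈ S, h i x (x i)) ↑S (fun x => P x + ∑ i ∈ S, m i x) := by
  classical
  refine fun x => ⟨?_, ?_⟩
  · choose z hz using fun i hi => (hm i hi x).1
    let y : ι → X := fun i => if hi : i ∈ S then z i hi else x i
    have hyx : Set.EqOn y x (↑S)ᶜ := fun i hi => dif_neg hi
    refine ⟨y, hyx, congrArg₂ _ (hP hyx) (sum_congr rfl fun i hi => ?_)⟩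
    rw [hh i hi hyx, ← hz i hi]
    simp only [y, dif_pos hi]
  · rintro _ ⟨y, hyx, rfl⟩
    dsimp only
    rw [hP hyx]
    gcongr with i hi
    rw [hh i hi hyx]
    exact (hm i hi x).2 ⟨y i, rfl⟩

end PartialMinimization

section Walks

variable {V : Type*} {t : ℕ} (r : V)

/-- The child of the computation-tree vertex `b` obtained by extending the walk `b` by a final step
to `u`. Adjacency and non-backtracking are not part of the data: see `childTV_mem_validSet_iff`. -/
def childTV (b : TVert V t) (u : V) (hb : b.1.1 < t) : TVert V t :=
  ⟨⟨b.1.1 + 1, by omega⟩, Fin.snoc (α := fun _ => V) b.2 u⟩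

lemma parTV_childTV (b : TVert V t) (u : V) (hb : b.1.1 < t) : parTV (childTV b u hb) = b :=
  Sigma.ext rfl (heq_of_eq (Fin.init_snoc (α := fun _ => V) u b.2))

lemma sigTV_childTV (b : TVert V t) (u : V) (hb : b.1.1 < t) : sigTV r (childTV b u hb) = u := by
  simp [sigTV, walkAt, childTV, Fin.snoc]

lemma childTV_parTV_sigTV (a : TVert V t) (ha : 1 ≤ a.1.1) (hpar : (parTV a).1.1 < t) :
    childTV (parTV a) (sigTV r a) hpar = a := by
  obtain ⟨⟨_ | k, hk⟩, p⟩ := a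
  · exact absurd ha (by simp)
  · have hlast : sigTV r ⟨⟨k + 1, hk⟩, p⟩ = p (Fin.last k) := dif_pos ⟨ha, le_rfl⟩
    rw [hlast]
    exact Sigma.ext rfl (heq_of_eq (Fin.snoc_init_self (α := fun _ => V) p))

lemma parTV_eq_self_of_length_eq_zero {a : TVert V t} (ha : a.1.1 = 0) : parTV a = a := by
  obtain ⟨⟨k, hk⟩, p⟩ := a
  obtain rfl : k = 0 := ha
  rfl

lemma eq_rootTV_of_length_eq_zero {a : TVert V t} (ha : a.1.1 = 0) : a = rootTV V t := by
  obtain ⟨⟨k, hk⟩, p⟩ := a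
  obtain rfl : k = 0 := ha
  exact Sigma.ext rfl (heq_of_eq (Subsingleton.elim _ _))

lemma sigTV_rootTV : sigTV r (rootTV V t) = r := rfl

lemma walkAt_parTV (a : TVert V t) {m : ℕ} (hm : m ≤ a.1.1 - 1) :
    walkAt r (parTV a) m = walkAt r a m := by
  have h : (1 ≤ m ∧ m ≤ (parTV a).1.1) ↔ (1 ≤ m ∧ m ≤ a.1.1) := by
    simp only [parTV]; omega
  simp only [walkAt, h]
  rfl

lemma walkAt_childTV (b : TVert V t) (u : V) (hb : b.1.1 < t) {m : ℕ} (hm : m ≤ b.1.1) :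
    walkAt r (childTV b u hb) m = walkAt r b m := by
  rw [← walkAt_parTV r _ (by simpa [childTV] using hm), parTV_childTV]

lemma walkAt_childTV_last (b : TVert V t) (u : V) (hb : b.1.1 < t) :
    walkAt r (childTV b u hb) (b.1.1 + 1) = u :=
  sigTV_childTV r b u hb

lemma forall_adj_childTV_iff (G : SimpleGraph V) (b : TVert V t) (u : V) (hb : b.1.1 < t) :
    (∀ m < b.1.1 + 1, G.Adj (walkAt r (childTV b u hb) m) (walkAt r (childTV b u hb) (m + 1))) ↔
      (∀ m < b.1.1, G.Adj (walkAt r b m) (walkAt r b (m + 1))) ∧ G.Adj (sigTV r b) u := by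
  rw [Nat.forall_lt_succ_right]
  refine and_congr (forall₂_congr fun m hm => ?_) ?_
  · rw [walkAt_childTV r b u hb hm.le, walkAt_childTV r b u hb hm]
  · rw [walkAt_childTV r b u hb le_rfl, walkAt_childTV_last]
    rfl

lemma forall_ne_childTV_iff (b : TVert V t) (u : V) (hb : b.1.1 < t) (hu : u ≠ sigTV r b) :
    (∀ m < b.1.1, walkAt r (childTV b u hb) m ≠ walkAt r (childTV b u hb) (m + 2)) ↔
      (∀ m < b.1.1 - 1, walkAt r b m ≠ walkAt r b (m + 2)) ∧ u ≠ sigTV r (parTV b) := by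
  rcases Nat.eq_zero_or_pos b.1.1 with h0 | hpos
  · simp [h0, parTV_eq_self_of_length_eq_zero h0, hu]
  obtain ⟨k, hk⟩ : ∃ k, b.1.1 = k + 1 := Nat.exists_eq_add_of_le' hpos
  have hpar : sigTV r (parTV b) = walkAt r b k := by
    have hlen : (parTV b).1.1 = k := by simp only [parTV]; omega
    rw [sigTV, hlen, walkAt_parTV r b (by omega)]
  have hlast : walkAt r (childTV b u hb) (k + 2) = u := by
    simpa only [hk] using walkAt_childTV_last r b u hb
  rw [hpar, hk, Nat.forall_lt_succ_right, hlast, walkAt_childTV r b u hb (by omega),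
    ne_comm (b := u)]
  refine and_congr_left' (forall₂_congr fun m hm => ?_)
  rw [walkAt_childTV r b u hb (by omega), walkAt_childTV r b u hb (by omega)]

end Walks

section ComputationTree

variable {V : Type*} [Fintype V] [DecidableEq V] (G : SimpleGraph V) [DecidableRel G.Adj] (r : V)
  {t : ℕ}

/-- The neighbours that continue the walk `a` without backtracking. The root is its own parent and
`G` has no loops, so at the root nothing is erased. -/
def forwardNeighbors (a : TVert V t) : Finset V :=
  (G.neighborFinset (sigTV r a)).erase (sigTV r (parTV a))

lemma childTV_mem_validSet_iff (b : TVert V t) (u : V) (hb : b.1.1 < t) :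
    childTV b u hb ∈ validSet G r t ↔ b ∈ validSet G r t ∧ u ∈ forwardNeighbors G r b := by
  simp only [validSet, mem_filter, mem_univ, true_and, forwardNeighbors, mem_erase,
    SimpleGraph.mem_neighborFinset]
  have hlen : (childTV b u hb).1.1 = b.1.1 + 1 := rfl
  rw [hlen, Nat.add_sub_cancel, forall_adj_childTV_iff r G]
  constructor
  · rintro ⟨⟨hadj, hbu⟩, hne⟩
    rw [forall_ne_childTV_iff r b u hb hbu.ne'] at hne
    exact ⟨⟨hadj, hne.1⟩, hne.2, hbu⟩
  · rintro ⟨⟨hadj, hne⟩, hback, hbu⟩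
    exact ⟨⟨hadj, hbu⟩, (forall_ne_childTV_iff r b u hb hbu.ne').2 ⟨hne, hback⟩⟩

lemma mem_validSet_iff_parTV {a : TVert V t} (ha : 1 ≤ a.1.1) :
    a ∈ validSet G r t ↔
      parTV a ∈ validSet G r t ∧ sigTV r a ∈ forwardNeighbors G r (parTV a) := by
  have hpar : (parTV a).1.1 < t := by have := a.1.2; simp only [parTV]; omega
  rw [← childTV_mem_validSet_iff G r (parTV a) (sigTV r a) hpar, childTV_parTV_sigTV r a ha]

/-- The tree vertices at depth `s`. -/
def treeLayer (t s : ℕ) : Finset (TVert V t) :=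
  {a ∈ validSet G r t | a.1.1 = s}

/-- The tree vertices other than the root at depth at most `s`. -/
def nonrootUpTo (t s : ℕ) : Finset (TVert V t) :=
  {a ∈ validSet G r t | 1 ≤ a.1.1 ∧ a.1.1 ≤ s}

lemma treeLayer_zero : treeLayer G r t 0 = {rootTV V t} := by
  ext a
  rw [treeLayer, mem_filter, mem_singleton]
  refine ⟨fun h => eq_rootTV_of_length_eq_zero h.2, ?_⟩
  rintro rfl
  simp [validSet, rootTV]

lemma nonrootUpTo_zero : nonrootUpTo G r t 0 = ∅ :=
  filter_eq_empty_iff.2 fun _ _ => by omega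

lemma nonrootUpTo_succ (s : ℕ) :
    nonrootUpTo G r t (s + 1) = treeLayer G r t (s + 1) ∪ nonrootUpTo G r t s := by
  rw [treeLayer, nonrootUpTo, nonrootUpTo, ← filter_or]
  exact filter_congr fun _ _ => by omega

lemma disjoint_treeLayer_nonrootUpTo (s : ℕ) :
    Disjoint (treeLayer G r t (s + 1)) (nonrootUpTo G r t s) :=
  disjoint_filter.2 fun _ _ => by omega

lemma nonrootUpTo_self : nonrootUpTo G r t t = {a ∈ validSet G r t | 1 ≤ a.1.1} :=
  filter_congr fun a _ => by have := a.1.2; omega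

lemma validSet_eq_insert_rootTV :
    validSet G r t = insert (rootTV V t) (nonrootUpTo G r t t) := by
  rw [insert_eq, ← treeLayer_zero G r, treeLayer, nonrootUpTo_self, ← filter_or]
  exact (filter_true_of_mem fun _ _ => by omega).symm

lemma rootTV_notMem_nonrootUpTo (s : ℕ) : rootTV V t ∉ nonrootUpTo G r t s := by
  simp [nonrootUpTo, rootTV]

lemma sum_treeLayer_succ {R : Type*} [AddCommMonoid R] {s : ℕ} (hs : s < t)
    (φ : TVert V t → V → R) :
    ∑ a ∈ treeLayer G r t (s + 1), φ (parTV a) (sigTV r a) =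
      ∑ b ∈ treeLayer G r t s, ∑ u ∈ forwardNeighbors G r b, φ b u := by
  have hlt {p : (_ : TVert V t) × V} (hp : p ∈ (treeLayer G r t s).sigma (forwardNeighbors G r)) :
      p.1.1.1 < t :=
    (mem_filter.1 (mem_sigma.1 hp).1).2.trans_lt hs
  rw [sum_sigma']
  refine sum_bij' (fun a _ => ⟨parTV a, sigTV r a⟩) (fun p hp => childTV p.1 p.2 (hlt hp))
    (fun a ha => ?_) (fun p hp => ?_) (fun a ha => ?_) (fun p hp => ?_) fun _ _ => rfl
  · obtain ⟨hmem, hlen⟩ := mem_filter.1 ha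
    obtain ⟨hpar, hsig⟩ := (mem_validSet_iff_parTV G r (by omega)).1 hmem
    exact mem_sigma.2 ⟨mem_filter.2 ⟨hpar, by simp only [parTV]; omega⟩, hsig⟩
  · obtain ⟨hb, hu⟩ := mem_sigma.1 hp
    obtain ⟨hmem, hlen⟩ := mem_filter.1 hb
    exact mem_filter.2 ⟨(childTV_mem_validSet_iff G r p.1 p.2 (hlt hp)).2 ⟨hmem, hu⟩,
      congrArg (· + 1) hlen⟩
  · exact childTV_parTV_sigTV r a (by have := (mem_filter.1 ha).2; omega) _
  · simp only [parTV_childTV, sigTV_childTV]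

end ComputationTree

section MinSum

variable {V X R : Type*} [Fintype V] [DecidableEq V] [AddCommMonoid R]
  (G : SimpleGraph V) [DecidableRel G.Adj] (f : V → X → R) (g : V → V → X → X → R)

/-- The local objective `b_i` determined by the messages `μ`, where `μ u i` is the message from `u`
to `i`. -/
def localObjective (μ : V → V → X → R) (i : V) (z : X) : R :=
  f i z + ∑ u ∈ G.neighborFinset i, μ u i z

/-- One round of min-sum: `ν` is the family of messages computed from `μ`, all minima being
attained. -/
def IsMinSumUpdate [LE R] (μ ν : V → V → X → R) : Prop :=
  ∀ i j, G.Adj i j → ∀ xj, IsLeast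
    (Set.range fun y => f i y + g i j y xj + ∑ u ∈ (G.neighborFinset i).erase j, μ u i y)
    (ν i j xj)

/-- The computation-tree objective `F_𝒯`, with the messages `μ` entering the leaves at depth `t`. -/
def treeObjective (μ : V → V → X → R) (r : V) (t : ℕ) (x : TVert V t → X) : R :=
  ∑ a ∈ validSet G r t, f (sigTV r a) (x a) +
    ∑ a ∈ validSet G r t with 1 ≤ a.1.1,
      g (sigTV r (parTV a)) (sigTV r a) (x (parTV a)) (x a) +
    ∑ a ∈ validSet G r t with a.1.1 = t,
      ∑ u ∈ forwardNeighbors G r a, μ u (sigTV r a) (x a)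

/-- The part of `F_𝒯` carried by the vertices of depth at most `s`: their single-variable factors
and the pair factors joining them to their parents. -/
def internalObjective (r : V) (t s : ℕ) (x : TVert V t → X) : R :=
  f r (x (rootTV V t)) + ∑ a ∈ nonrootUpTo G r t s,
    (f (sigTV r a) (x a) + g (sigTV r (parTV a)) (sigTV r a) (x (parTV a)) (x a))

/-- The objective of the computation tree cut at depth `s`, with the messages `μ` entering the
vertices at depth `s`. -/
def truncatedObjective (μ : V → V → X → R) (r : V) (t s : ℕ) (x : TVert V t → X) : R :=
  internalObjective G f g r t s x +
    ∑ a ∈ treeLayer G r t s, ∑ u ∈ forwardNeighbors G r a, μ u (sigTV r a) (x a)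

lemma truncatedObjective_zero (μ : V → V → X → R) (r : V) (t : ℕ) (x : TVert V t → X) :
    truncatedObjective G f g μ r t 0 x = localObjective G f μ r (x (rootTV V t)) := by
  have hroot : forwardNeighbors G r (rootTV V t) = G.neighborFinset r :=
    erase_eq_of_notMem (G.notMem_neighborFinset_self r)
  rw [truncatedObjective, internalObjective, nonrootUpTo_zero, sum_empty, add_zero, treeLayer_zero,
    sum_singleton, hroot]
  rfl

lemma truncatedObjective_self (μ : V → V → X → R) (r : V) (t : ℕ) (x : TVert V t → X) :
    truncatedObjective G f g μ r t t x = treeObjective G f g μ r t x := by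
  have hsum : ∑ a ∈ validSet G r t, f (sigTV r a) (x a) =
      f r (x (rootTV V t)) + ∑ a ∈ nonrootUpTo G r t t, f (sigTV r a) (x a) := by
    rw [validSet_eq_insert_rootTV, sum_insert (rootTV_notMem_nonrootUpTo G r t), sigTV_rootTV]
  rw [treeObjective, hsum, ← nonrootUpTo_self, truncatedObjective, internalObjective,
    sum_add_distrib, ← add_assoc]
  rfl

lemma dependsOn_internalObjective (r : V) (t s : ℕ) :
    DependsOn (internalObjective G f g r t s) {a | a.1.1 ≤ s} := by
  intro x y hxy
  rw [internalObjective, internalObjective, hxy (rootTV V t) (Nat.zero_le s)]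
  refine congrArg _ (sum_congr rfl fun a ha => ?_)
  have hle := (mem_filter.1 ha).2.2
  rw [hxy a hle, hxy (parTV a) ((Nat.sub_le _ _).trans hle)]

/-- The terms of the tree objective involving the value `z` at the vertex `a`, once the subtrees
below `a` have been replaced by the messages `μ`. The parent's value is read off `x`. -/
def vertexObjective (μ : V → V → X → R) (r : V) {t : ℕ} (a : TVert V t) (x : TVert V t → X)
    (z : X) : R :=
  f (sigTV r a) z + g (sigTV r (parTV a)) (sigTV r a) (x (parTV a)) z +
    ∑ u ∈ forwardNeighbors G r a, μ u (sigTV r a) z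

lemma truncatedObjective_succ (μ : V → V → X → R) (r : V) (t s : ℕ) (x : TVert V t → X) :
    truncatedObjective G f g μ r t (s + 1) x = internalObjective G f g r t s x +
      ∑ a ∈ treeLayer G r t (s + 1), vertexObjective G f g μ r a x (x a) := by
  simp only [truncatedObjective, internalObjective, vertexObjective, nonrootUpTo_succ,
    sum_union (disjoint_treeLayer_nonrootUpTo G r s), sum_add_distrib]
  ac_rfl

lemma truncatedObjective_eq_add_sum_treeLayer_succ (ν : V → V → X → R) (r : V) {t s : ℕ}
    (hs : s < t) (x : TVert V t → X) :
    truncatedObjective G f g ν r t s x = internalObjective G f g r t s x +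
      ∑ a ∈ treeLayer G r t (s + 1), ν (sigTV r a) (sigTV r (parTV a)) (x (parTV a)) := by
  rw [truncatedObjective, sum_treeLayer_succ G r hs fun b u => ν u (sigTV r b) (x b)]

variable {G f g}

lemma isLeast_vertexObjective [LE R] (hg_symm : ∀ i j, G.Adj i j → ∀ y z, g i j y z = g j i z y)
    {μ ν : V → V → X → R} (hμν : IsMinSumUpdate G f g μ ν) {r : V} {t : ℕ} {a : TVert V t}
    (ha : a ∈ validSet G r t) (hpos : 1 ≤ a.1.1) (x : TVert V t → X) :
    IsLeast (Set.range (vertexObjective G f g μ r a x))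
      (ν (sigTV r a) (sigTV r (parTV a)) (x (parTV a))) := by
  have hadj : G.Adj (sigTV r (parTV a)) (sigTV r a) := by
    simpa using mem_of_mem_erase ((mem_validSet_iff_parTV G r hpos).1 ha).2
  unfold vertexObjective
  simp only [hg_symm _ _ hadj]
  exact hμν _ _ hadj.symm _

variable [Preorder R] [IsOrderedAddMonoid R]

lemma isPartialMin_truncatedObjective_succ
    (hg_symm : ∀ i j, G.Adj i j → ∀ y z, g i j y z = g j i z y)
    {μ ν : V → V → X → R} (hμν : IsMinSumUpdate G f g μ ν) (r : V) {t s : ℕ} (hs : s < t) :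
    IsPartialMin (truncatedObjective G f g μ r t (s + 1)) ↑(treeLayer G r t (s + 1))
      (truncatedObjective G f g ν r t s) := by
  have hshallow : {a : TVert V t | a.1.1 ≤ s} ⊆ (↑(treeLayer G r t (s + 1)))ᶜ :=
    fun a (ha : a.1.1 ≤ s) h => by have := (mem_filter.1 h).2; omega
  rw [funext (truncatedObjective_succ G f g μ r t s),
    funext (truncatedObjective_eq_add_sum_treeLayer_succ G f g ν r hs)]
  refine isPartialMin_add_sum ((dependsOn_internalObjective G f g r t s).mono hshallow)
    (fun a ha x y hxy => ?_) fun a ha x => ?_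
  · have hpar : (parTV a).1.1 ≤ s := Nat.sub_le_of_le_add (mem_filter.1 ha).2.le
    funext z
    rw [vertexObjective, hxy (parTV a) (hshallow hpar)]
    rfl
  · obtain ⟨hmem, hlen⟩ := mem_filter.1 ha
    exact isLeast_vertexObjective hg_symm hμν hmem (by omega) x

lemma isPartialMin_truncatedObjective
    (hg_symm : ∀ i j, G.Adj i j → ∀ y z, g i j y z = g j i z y)
    {J : ℕ → V → V → X → R} (hJ : ∀ k, IsMinSumUpdate G f g (J k) (J (k + 1))) (r : V) {t s : ℕ}
    (hs : s ≤ t) (k : ℕ) :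
    IsPartialMin (truncatedObjective G f g (J k) r t s) ↑(nonrootUpTo G r t s)
      (truncatedObjective G f g (J (k + s)) r t 0) := by
  induction s generalizing k with
  | zero => simpa [nonrootUpTo_zero] using isPartialMin_empty _
  | succ s ih =>
    have hlayer := isPartialMin_truncatedObjective_succ hg_symm (hJ k) r hs
    have hrest := ih (Nat.le_of_succ_le hs) (k + 1)
    rw [nonrootUpTo_succ, coe_union, ← add_assoc, add_right_comm]
    exact hlayer.trans hrest

lemma isPartialMin_treeObjective
    (hg_symm : ∀ i j, G.Adj i j → ∀ y z, g i j y z = g j i z y)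
    {J : ℕ → V → V → X → R} (hJ : ∀ k, IsMinSumUpdate G f g (J k) (J (k + 1))) (r : V) (t : ℕ) :
    IsPartialMin (treeObjective G f g (J 0) r t) ↑(nonrootUpTo G r t t)
      (fun x => localObjective G f (J t) r (x (rootTV V t))) := by
  have h := isPartialMin_truncatedObjective hg_symm hJ r (le_refl t) 0
  rwa [funext (truncatedObjective_self G f g (J 0) r t), zero_add,
    funext (truncatedObjective_zero G f g (J t) r t)] at h

lemma isMinOn_localObjective_rootTV
    (hg_symm : ∀ i j, G.Adj i j → ∀ y z, g i j y z = g j i z y)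
    {J : ℕ → V → V → X → R} (hJ : ∀ k, IsMinSumUpdate G f g (J k) (J (k + 1)))
    {r : V} {t : ℕ} {x : TVert V t → X}
    (hx : IsMinOn (treeObjective G f g (J 0) r t) {y | Set.EqOn y x (↑(validSet G r t))ᶜ} x) :
    IsMinOn (localObjective G f (J t) r) Set.univ (x (rootTV V t)) := by
  rw [validSet_eq_insert_rootTV, coe_insert, ← Set.union_singleton] at hx
  have hmin := (isPartialMin_treeObjective hg_symm hJ r t).isMinOn hx
  intro z _
  have hz := hmin (a := Function.update x (rootTV V t) z) fun a ha => Function.update_of_ne ha z x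
  simpa using hz

theorem computationTree_root_eq_minSum_estimate_general
    (hg_symm : ∀ i j, G.Adj i j → ∀ y z, g i j y z = g j i z y)
    {J : ℕ → V → V → X → R} (hJ : ∀ k, IsMinSumUpdate G f g (J k) (J (k + 1)))
    {r : V} {t : ℕ} {z : X}
    (hz : ∀ y, y ≠ z → localObjective G f (J t) r z < localObjective G f (J t) r y)
    {x : TVert V t → X}
    (hx : IsMinOn (treeObjective G f g (J 0) r t) {y | Set.EqOn y x (↑(validSet G r t))ᶜ} x) :
    x (rootTV V t) = z :=
  by_contra fun hne =>
    (hz _ hne).not_ge (isMinOn_localObjective_rootTV hg_symm hJ hx (Set.mem_univ z))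

end MinSum

/-- **The root of the computation tree computes the min-sum estimate** (Section 2.3 of
Moallemi–Van Roy).  If `x̃` is the unique minimizer of the computation-tree objective
`F_𝒯` (as a function of the coordinates indexed by the tree vertices), then its value at
the root equals the min-sum estimate: `x̃_root = x⁽ᵗ⁾_r`. -/
theorem computationTree_root_eq_minSum_estimate
    {V : Type*} [Fintype V] [DecidableEq V] [Nonempty V]
    (G : SimpleGraph V) [DecidableRel G.Adj]
    -- the factors of the pairwise separable convex program
    (f : V → ℝ → ℝ) (g : V → V → ℝ → ℝ → ℝ)
    (hf_sconv : ∀ i, StrictConvexOn ℝ Set.univ (f i))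
    (hf_coer : ∀ i, Tendsto (f i) (cocompact ℝ) atTop)
    (hf_smooth : ∀ i, ContDiff ℝ 2 (f i))
    (hg_conv : ∀ i j, G.Adj i j → ConvexOn ℝ Set.univ (fun q : ℝ × ℝ => g i j q.1 q.2))
    (hg_smooth : ∀ i j, G.Adj i j → ContDiff ℝ 2 (fun q : ℝ × ℝ => g i j q.1 q.2))
    (hg_symm : ∀ i j, G.Adj i j → ∀ a b : ℝ, g i j a b = g j i b a)
    -- the objective function
    (F : (V → ℝ) → ℝ)
    (hF : F = fun x => (∑ i, f i (x i)) +
      (1 / 2) * ∑ i, ∑ j ∈ G.neighborFinset i, g i j (x i) (x j))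
    -- `M = min_i inf_x ∂²F/∂x_i²(x) > 0`
    (M : ℝ) (hM : 0 < M) (hMle : ∀ (i : V) (x : V → ℝ), M ≤ pd2 F i i x)
    -- the min-sum messages and their update rule (minima are attained)
    (J : ℕ → V → V → ℝ → ℝ)
    (hJrec : ∀ (s : ℕ) (i j : V), G.Adj i j → ∀ xj : ℝ,
      IsLeast (Set.range fun y : ℝ =>
          f i y + g i j y xj + ∑ u ∈ (G.neighborFinset i).erase j, J s u i y)
        (J (s + 1) i j xj))
    -- the estimates: unique minimizers of the local objectives `b⁽ˢ⁾_i`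
    (xEst : ℕ → V → ℝ)
    (hxEst : ∀ (s : ℕ) (i : V) (y : ℝ), y ≠ xEst s i →
      f i (xEst s i) + ∑ u ∈ G.neighborFinset i, J s u i (xEst s i) <
        f i y + ∑ u ∈ G.neighborFinset i, J s u i y)
    -- the root and depth of the computation tree, and its objective function
    (r : V) (t : ℕ)
    (FT : (TVert V t → ℝ) → ℝ)
    (hFT : FT = fun x =>
      (∑ a ∈ validSet G r t, f (sigTV r a) (x a)) +
      (∑ a ∈ (validSet G r t).filter (fun a => 1 ≤ a.1.1),
        g (sigTV r (parTV a)) (sigTV r a) (x (parTV a)) (x a)) +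
      (∑ a ∈ (validSet G r t).filter (fun a => a.1.1 = t),
        ∑ u ∈ (G.neighborFinset (sigTV r a)).erase (sigTV r (parTV a)),
          J 0 u (sigTV r a) (x a)))
    -- `x̃` is the unique minimizer of `F_𝒯` over the tree coordinates
    (xt : TVert V t → ℝ)
    (hxt : ∀ y : TVert V t → ℝ, (∀ a, a ∉ validSet G r t → y a = xt a) → y ≠ xt →
      FT xt < FT y) :
    xt (rootTV V t) = xEst t r := by
  subst hFT
  exact computationTree_root_eq_minSum_estimate_general hg_symm hJrec (hxEst t r)
    (isMinOn_of_forall_ne_lt hxt)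
end

section
/- Let (V,E) be a finite simple undirected graph and let A ∈ ℝ^{V×V} be a symmetric positive definite matrix that admits a pairwise convex decomposition: A = Λ + Σ_{{i,j}∈E} B^{ij}, where Λ is a diagonal matrix with strictly positive diagonal entries and each B^{ij} is a positive semidefinite symmetric matrix whose entries vanish outside of {i,j} × {i,j}. Then the quadratic form F(x) = (1/2) xᵀAx is scaled diagonally dominant: there exist λ ∈ (0,1) and w ∈ ℝ^V with w > 0 componentwise such that for every i ∈ V, Σ_{j∈V∖{i}} w_j |A_{ij}| ≤ λ w_i A_{ii}. -/
open Finset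

/-!
Replace the off-diagonal entries of `A` by minus their absolute values, which gives the comparison
matrix `M(A)`. If `B` is positive semidefinite and supported on `{i, j} × {i, j}`, then flipping the
sign of at most one coordinate turns `B` into `M(B)`, so `M(B)` is again positive semidefinite. By
the triangle inequality `M(∑ B)` dominates `∑ M(B)` entrywise, and since replacing `x` by `|x|` can
only decrease the quadratic form of a matrix with nonpositive off-diagonal entries, positive
semidefiniteness passes from `∑ M(B)` to `M(∑ B)`. Adding `Λ` makes `M(A)` positive definite. The
solution `w` of `M(A) w = 1` is then positive, and row `i` of this system reads
`w i * A i i = 1 + ∑ j ≠ i, w j * |A i j|`. This linear system takes the place of the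
Perron–Frobenius eigenvector.
-/

open Matrix

section

variable {ι V R : Type*}

/-- Scaled diagonal dominance of the quadratic form `x ↦ (1/2) xᵀAx`, expressed through its Hessian
`A`: off-diagonal row sums weighted by some `w > 0` are at most a fraction `lam < 1` of the weighted
diagonal entry. -/
def IsScaledDiagDominant_s11 [Fintype V] [DecidableEq V] [CommRing R] [LinearOrder R]
    (A : Matrix V V R) : Prop :=
  ∃ (lam : R) (w : V → R), 0 < lam ∧ lam < 1 ∧ (∀ i, 0 < w i) ∧
    ∀ i, ∑ j ∈ univ.erase i, w j * |A i j| ≤ lam * w i * A i i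

/-- A Z-matrix: every off-diagonal entry is nonpositive. -/
def IsZMatrix [Zero R] [LE R] (M : Matrix V V R) : Prop :=
  Pairwise fun i j ↦ M i j ≤ 0

/-- The comparison matrix of `A`, whose positive definiteness yields scaled diagonal dominance of
`A`. The usual definition has `|A i i|` on the diagonal; here the diagonal keeps its sign, so that
it is additive in `A`. -/
def comparisonMatrix [DecidableEq V] [Lattice R] [AddGroup R] (A : Matrix V V R) : Matrix V V R :=
  of fun i j ↦ if i = j then A i i else -|A i j|

namespace IsZMatrix

variable [CommRing R] [LinearOrder R] [IsStrictOrderedRing R] {M N : Matrix V V R}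

theorem dotProduct_mulVec_abs_le [Fintype V] (hM : IsZMatrix M) (x : V → R) :
    |x| ⬝ᵥ M *ᵥ |x| ≤ x ⬝ᵥ M *ᵥ x := by
  simp only [dot_mulVec_eq_sum_sum, Pi.abs_apply]
  refine sum_le_sum fun j _ ↦ sum_le_sum fun i _ ↦ ?_
  rcases eq_or_ne i j with rfl | hij
  · rw [mul_right_comm, abs_mul_abs_self, mul_right_comm]
  · have hx : x i * x j ≤ |x i| * |x j| := abs_mul (x i) (x j) ▸ le_abs_self _
    linarith [mul_le_mul_of_nonpos_left hx (hM hij)]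

theorem dotProduct_mulVec_nonpos [Fintype V] (hM : IsZMatrix M) {x y : V → R} (hx : 0 ≤ x)
    (hy : 0 ≤ y) (hxy : x * y = 0) : x ⬝ᵥ M *ᵥ y ≤ 0 := by
  rw [dot_mulVec_eq_sum_sum]
  refine sum_nonpos fun j _ ↦ sum_nonpos fun i _ ↦ ?_
  rcases eq_or_ne i j with rfl | hij
  · rw [mul_right_comm, ← Pi.mul_apply, hxy, Pi.zero_apply, zero_mul]
  · exact mul_nonpos_of_nonpos_of_nonneg (mul_nonpos_of_nonneg_of_nonpos (hx i) (hM hij)) (hy j)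

variable [StarRing R] [TrivialStar R]

theorem posSemidef_of_le [Finite V] (hN : IsZMatrix N) (hNsymm : N.IsSymm) (hM : M.PosSemidef)
    (hMN : ∀ i j, M i j ≤ N i j) : N.PosSemidef := by
  have := Fintype.ofFinite V
  refine .of_dotProduct_mulVec_nonneg (isHermitian_iff_isSymm.2 hNsymm) fun x ↦ ?_
  calc
    0 ≤ |x| ⬝ᵥ M *ᵥ |x| := by simpa only [star_trivial] using hM.dotProduct_mulVec_nonneg |x|
    _ ≤ |x| ⬝ᵥ N *ᵥ |x| := by
      simp only [dot_mulVec_eq_sum_sum, Pi.abs_apply]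
      gcongr
      exact hMN _ _
    _ ≤ x ⬝ᵥ N *ᵥ x := hN.dotProduct_mulVec_abs_le x
    _ = star x ⬝ᵥ N *ᵥ x := by rw [star_trivial]

theorem nonneg_of_mulVec_nonneg [Fintype V] (hM : IsZMatrix M) (hMpos : M.PosDef)
    {w : V → R} (hw : 0 ≤ M *ᵥ w) : 0 ≤ w := by
  by_contra hneg
  have hform_pos : 0 < w⁻ ⬝ᵥ M *ᵥ w⁻ := by
    simpa only [star_trivial] using hMpos.dotProduct_mulVec_pos (mt negPart_eq_zero.1 hneg)
  have hdisjoint : w⁻ * w⁺ = 0 := by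
    ext i
    rcases le_total 0 (w i) with h | h <;> simp [h]
  have hcross : w⁻ ⬝ᵥ M *ᵥ w⁺ ≤ 0 :=
    hM.dotProduct_mulVec_nonpos (negPart_nonneg w) (posPart_nonneg w) hdisjoint
  have hform_w : 0 ≤ w⁻ ⬝ᵥ M *ᵥ w := dotProduct_nonneg_of_nonneg (negPart_nonneg w) hw
  have hsplit : w⁻ ⬝ᵥ M *ᵥ w = w⁻ ⬝ᵥ M *ᵥ w⁺ - w⁻ ⬝ᵥ M *ᵥ w⁻ := by
    rw [← dotProduct_sub, ← mulVec_sub, posPart_sub_negPart]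
  linarith

theorem pos_of_mulVec_pos [Fintype V] (hM : IsZMatrix M) (hMpos : M.PosDef) {w : V → R}
    (hw : ∀ i, 0 < (M *ᵥ w) i) (i : V) : 0 < w i := by
  classical
  have hw_nonneg : 0 ≤ w := hM.nonneg_of_mulVec_nonneg hMpos fun i ↦ (hw i).le
  have hoff : ∑ j ∈ univ.erase i, M i j * w j ≤ 0 := sum_nonpos fun j hj ↦
    mul_nonpos_of_nonpos_of_nonneg (hM (ne_of_mem_erase hj).symm) (hw_nonneg j)
  have hrow : (M *ᵥ w) i = M i i * w i + ∑ j ∈ univ.erase i, M i j * w j :=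
    (add_sum_erase _ _ (mem_univ i)).symm
  have hdiag : 0 < M i i * w i := by linarith [hw i]
  exact pos_of_mul_pos_right hdiag hMpos.diag_pos.le

end IsZMatrix

section ComparisonMatrix

variable [DecidableEq V]

section AddGroup

variable [Lattice R] [AddGroup R] {A : Matrix V V R}

@[simp]
theorem comparisonMatrix_apply_self (A : Matrix V V R) (i : V) :
    comparisonMatrix A i i = A i i := by
  simp [comparisonMatrix]

theorem comparisonMatrix_apply_of_ne (A : Matrix V V R) {i j : V} (hij : i ≠ j) :
    comparisonMatrix A i j = -|A i j| := by
  simp [comparisonMatrix, hij]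

theorem isSymm_comparisonMatrix (hA : A.IsSymm) : (comparisonMatrix A).IsSymm := by
  refine .ext fun i j ↦ ?_
  rcases eq_or_ne i j with rfl | hij
  · rfl
  · rw [comparisonMatrix_apply_of_ne A hij, comparisonMatrix_apply_of_ne A hij.symm, hA.apply]

theorem comparisonMatrix_diagonal_add (d : V → R) (A : Matrix V V R) :
    comparisonMatrix (diagonal d + A) = diagonal d + comparisonMatrix A := by
  ext i j
  rcases eq_or_ne i j with rfl | hij
  · simp
  · simp [comparisonMatrix_apply_of_ne _ hij, hij]

end AddGroup

variable [CommRing R] [LinearOrder R]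

theorem comparisonMatrix_mulVec_apply [Fintype V] (A : Matrix V V R) (w : V → R) (i : V) :
    (comparisonMatrix A *ᵥ w) i = w i * A i i - ∑ j ∈ univ.erase i, w j * |A i j| := by
  rw [mulVec_eq_sum, Finset.sum_apply, ← add_sum_erase _ _ (mem_univ i), sub_eq_add_neg,
    ← sum_neg_distrib]
  refine congrArg₂ (· + ·) (by simp [mul_comm]) (sum_congr rfl fun j hj ↦ ?_)
  simp [comparisonMatrix_apply_of_ne A (ne_of_mem_erase hj).symm, mul_comm]

variable [IsStrictOrderedRing R]

theorem isZMatrix_comparisonMatrix (A : Matrix V V R) : IsZMatrix (comparisonMatrix A) :=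
  fun i j hij ↦ by simp [comparisonMatrix_apply_of_ne A hij]

theorem comparisonMatrix_smul {c : R} (hc : 0 ≤ c) (A : Matrix V V R) :
    comparisonMatrix (c • A) = c • comparisonMatrix A := by
  ext i j
  rcases eq_or_ne i j with rfl | hij
  · simp
  · simp [comparisonMatrix_apply_of_ne _ hij, abs_mul, abs_of_nonneg hc]

theorem sum_comparisonMatrix_apply_le (s : Finset ι) (B : ι → Matrix V V R) (i j : V) :
    (∑ k ∈ s, comparisonMatrix (B k)) i j ≤ comparisonMatrix (∑ k ∈ s, B k) i j := by
  rcases eq_or_ne i j with rfl | hij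
  · simp [Matrix.sum_apply]
  · simpa [comparisonMatrix_apply_of_ne _ hij, Matrix.sum_apply] using
      abs_sum_le_sum_abs (fun k ↦ B k i j) s

variable [Finite V] [StarRing R] [TrivialStar R]

theorem posSemidef_comparisonMatrix_sum {s : Finset ι} {B : ι → Matrix V V R}
    (hsymm : ∀ k ∈ s, (B k).IsSymm) (hpsd : ∀ k ∈ s, (comparisonMatrix (B k)).PosSemidef) :
    (comparisonMatrix (∑ k ∈ s, B k)).PosSemidef := by
  have hsum_symm : (∑ k ∈ s, B k).IsSymm := by
    rw [IsSymm, transpose_sum]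
    exact sum_congr rfl hsymm
  exact (isZMatrix_comparisonMatrix _).posSemidef_of_le (isSymm_comparisonMatrix hsum_symm)
    (posSemidef_sum s hpsd) (sum_comparisonMatrix_apply_le s B)

theorem posSemidef_comparisonMatrix_of_support_pair {B : Matrix V V R} (hB : B.PosSemidef)
    {i j : V} (hsupp : ∀ a b, ¬((a = i ∨ a = j) ∧ (b = i ∨ b = j)) → B a b = 0) :
    (comparisonMatrix B).PosSemidef := by
  have := Fintype.ofFinite V
  obtain ⟨s, hs_sq, hs⟩ : ∃ s : R, s * s = 1 ∧ s * B i j = -|B i j| := by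
    rcases le_total 0 (B i j) with h | h
    · exact ⟨-1, by simp, by simp [abs_of_nonneg h]⟩
    · exact ⟨1, by simp, by simp [abs_of_nonpos h]⟩
  have hBsymm : B j i = B i j := (isHermitian_iff_isSymm.1 hB.isHermitian).apply i j
  let d : V → R := fun a ↦ if a = j then s else 1
  suffices comparisonMatrix B = (diagonal d)ᴴ * B * diagonal d from
    this ▸ hB.conjTranspose_mul_mul_same _
  ext a b
  rw [diagonal_conjTranspose, star_trivial, mul_diagonal, diagonal_mul]
  rcases eq_or_ne a b with rfl | hab
  · have hd_sq : d a * d a = 1 := by by_cases h : a = j <;> simp [d, h, hs_sq]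
    rw [comparisonMatrix_apply_self, mul_right_comm, hd_sq, one_mul]
  rw [comparisonMatrix_apply_of_ne B hab]
  by_cases hmem : (a = i ∨ a = j) ∧ (b = i ∨ b = j)
  · rcases hmem with ⟨rfl | rfl, rfl | rfl⟩
    · exact absurd rfl hab
    · simp [d, hab, ← hs, mul_comm]
    · simp [d, hab.symm, hBsymm, hs]
    · exact absurd rfl hab
  · simp [hsupp a b hmem]

end ComparisonMatrix

section ScaledDiagDominant

variable [Field R] [LinearOrder R]

theorem exists_lt_one_forall_le_mul [IsStrictOrderedRing R] [Finite ι] {f g : ι → R}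
    (hg : ∀ i, 0 < g i) (hfg : ∀ i, f i < g i) : ∃ c, 0 < c ∧ c < 1 ∧ ∀ i, f i ≤ c * g i := by
  have hratio (i : ι) : ∃ c : Set.Ioo (0 : R) 1, f i / g i ≤ c := by
    obtain ⟨c, hc, hc_lt⟩ :=
      exists_between (max_lt zero_lt_one ((div_lt_one (hg i)).2 (hfg i)))
    exact ⟨⟨c, (le_max_left _ _).trans_lt hc, hc_lt⟩, (le_max_right _ _).trans hc.le⟩
  choose c hc using hratio
  have : Nonempty (Set.Ioo (0 : R) 1) := Set.nonempty_Ioo_subtype zero_lt_one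
  obtain ⟨⟨cmax, hpos, hlt⟩, hle⟩ := Finite.exists_le c
  exact ⟨cmax, hpos, hlt, fun i ↦ (div_le_iff₀ (hg i)).1 ((hc i).trans (hle i))⟩

variable [Fintype V] [DecidableEq V] [StarRing R]

theorem isScaledDiagDominant_of_posDef_comparisonMatrix [IsStrictOrderedRing R] [TrivialStar R]
    {A : Matrix V V R} (hA : (comparisonMatrix A).PosDef) : IsScaledDiagDominant_s11 A := by
  obtain ⟨w, hw⟩ : ∃ w, comparisonMatrix A *ᵥ w = 1 :=
    mulVec_surjective_iff_isUnit.2 hA.isUnit 1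
  have hw_pos : ∀ i, 0 < w i :=
    (isZMatrix_comparisonMatrix A).pos_of_mulVec_pos hA fun i ↦ by simp [hw]
  have hdiag_pos (i : V) : 0 < A i i := comparisonMatrix_apply_self A i ▸ hA.diag_pos
  have hrow (i : V) : ∑ j ∈ univ.erase i, w j * |A i j| < w i * A i i := by
    have h := congrFun hw i
    rw [comparisonMatrix_mulVec_apply, Pi.one_apply] at h
    linarith
  obtain ⟨lam, hlam_pos, hlam_lt, hlam⟩ :=
    exists_lt_one_forall_le_mul (fun i ↦ mul_pos (hw_pos i) (hdiag_pos i)) hrow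
  exact ⟨lam, w, hlam_pos, hlam_lt, hw_pos, fun i ↦ (hlam i).trans_eq (mul_assoc _ _ _).symm⟩

theorem quadratic_pairwise_decomposable_is_scaled_diagonally_dominant_general [StarOrderedRing R]
    (G : SimpleGraph V) [DecidableRel G.Adj] (A : Matrix V V R) (Λ : V → R) (hΛ : ∀ i, 0 < Λ i)
    (B : V → V → Matrix V V R) (hBpsd : ∀ i j, G.Adj i j → (B i j).PosSemidef)
    (hBsupp : ∀ i j, G.Adj i j → ∀ a b : V,
      ¬((a = i ∨ a = j) ∧ (b = i ∨ b = j)) → B i j a b = 0)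
    (hdecomp : A = diagonal Λ + (1 / 2 : R) • ∑ i, ∑ j ∈ G.neighborFinset i, B i j) :
    IsScaledDiagDominant_s11 A := by
  have : IsStrictOrderedRing R := IsOrderedRing.toIsStrictOrderedRing R
  apply isScaledDiagDominant_of_posDef_comparisonMatrix
  rw [hdecomp, comparisonMatrix_diagonal_add, comparisonMatrix_smul one_half_pos.le, sum_sigma']
  have hadj {e : Σ _ : V, V} (he : e ∈ univ.sigma fun i ↦ G.neighborFinset i) :
      G.Adj e.1 e.2 := by
    simpa using he
  have hpairs : (comparisonMatrix
      (∑ e ∈ univ.sigma fun i ↦ G.neighborFinset i, B e.1 e.2)).PosSemidef :=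
    posSemidef_comparisonMatrix_sum
      (fun _ he ↦ isHermitian_iff_isSymm.1 (hBpsd _ _ (hadj he)).isHermitian)
      (fun _ he ↦ posSemidef_comparisonMatrix_of_support_pair (hBpsd _ _ (hadj he))
        (hBsupp _ _ (hadj he)))
  exact (PosDef.diagonal hΛ).add_posSemidef (hpairs.smul one_half_pos.le)

end ScaledDiagDominant

end

/-- **Quadratic objectives with pairwise convex decompositions are scaled diagonally
dominant** (consequence of the Perron–Frobenius theorem, cf. Malioutov et al. and
Section 2.2 of Moallemi–Van Roy).  If a symmetric positive definite matrix `A` decomposes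
as `A = Λ + Σ_{{i,j}∈E} B^{ij}` with `Λ` diagonal with positive entries and each `B^{ij}`
positive semidefinite and supported on `{i,j} × {i,j}`, then the quadratic form
`F(x) = (1/2) xᵀAx` is scaled diagonally dominant: there are `λ ∈ (0,1)` and `w > 0`
with `Σ_{j≠i} w_j |A_{ij}| ≤ λ w_i A_{ii}` for all `i`. -/
theorem quadratic_pairwise_decomposable_is_scaled_diagonally_dominant
    {V : Type*} [Fintype V] [DecidableEq V]
    (G : SimpleGraph V) [DecidableRel G.Adj]
    (A : Matrix V V ℝ) (hAsym : A.IsSymm) (hApd : A.PosDef)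
    -- the diagonal part, with strictly positive entries
    (Λ : V → ℝ) (hΛ : ∀ i, 0 < Λ i)
    -- the pairwise parts: positive semidefinite, supported on `{i,j} × {i,j}`
    (B : V → V → Matrix V V ℝ)
    (hBsymm : ∀ i j, G.Adj i j → B i j = B j i)
    (hBpsd : ∀ i j, G.Adj i j → (B i j).PosSemidef)
    (hBsupp : ∀ i j, G.Adj i j → ∀ a b : V,
      ¬((a = i ∨ a = j) ∧ (b = i ∨ b = j)) → B i j a b = 0)
    -- the decomposition `A = Λ + Σ_{{i,j}∈E} B^{ij}` (each edge counted once)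
    (hdecomp : A = Matrix.diagonal Λ +
      (1 / 2 : ℝ) • ∑ i, ∑ j ∈ G.neighborFinset i, B i j) :
    ∃ (lam : ℝ) (w : V → ℝ), 0 < lam ∧ lam < 1 ∧ (∀ i, 0 < w i) ∧
      ∀ i, ∑ j ∈ univ.erase i, w j * |A i j| ≤ lam * w i * A i i :=
  quadratic_pairwise_decomposable_is_scaled_diagonally_dominant_general G A Λ hΛ B hBpsd hBsupp
    hdecomp
end
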